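/- There exists an absolute constant s₀ such that the following holds: for all integers s ≥ s₀, k ≥ 2 and n with n ≥ (5/3)·s·k − (2/3)·s, one has m(n,k,s) = C(n,k) − C(n−s,k), where C(a,b) denotes the binomial coefficient. -/

import Mathlib

open Finset

/-- The matching number of a family of finite sets: the maximum size of a
subfamily consisting of pairwise disjoint sets. -/
noncomputable def matchingNumber (F : Finset (Finset ℕ)) : ℕ :=
  sSup {t : ℕ | ∃ M : Finset (Finset ℕ), M ⊆ F ∧
    (M : Set (Finset ℕ)).Pairwise (fun A B => Disjoint A B) ∧ M.card = t}

/-- `maxSizeEMC n k s` is `m(n,k,s)`: the maximum size of a family of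
`k`-element subsets of an `n`-element set with no matching of size `s+1`. -/
noncomputable def maxSizeEMC (n k s : ℕ) : ℕ :=
  sSup {t : ℕ | ∃ F : Finset (Finset ℕ), F ⊆ (Finset.range n).powersetCard k ∧
    matchingNumber F ≤ s ∧ F.card = t}


def Shf (F : Finset (Finset ℕ)) : Prop :=
  ∀ A ∈ F, ∀ i j, i < j → j ∈ A → i ∉ A → insert i (A.erase j) ∈ F

def NM (F : Finset (Finset ℕ)) (s : ℕ) : Prop :=
  ∀ f : Fin (s+1) → Finset ℕ, (∀ i, f i ∈ F) → ¬ ∀ i j, i ≠ j → Disjoint (f i) (f j)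

def shSet (i j : ℕ) (A : Finset ℕ) : Finset ℕ :=
  if j ∈ A ∧ i ∉ A then insert i (A.erase j) else A

def shFam (i j : ℕ) (F : Finset (Finset ℕ)) : Finset (Finset ℕ) :=
  F.image (fun A => if shSet i j A ∈ F then A else shSet i j A)

lemma shSet_card (i j : ℕ) (A : Finset ℕ) : (shSet i j A).card = A.card := by
  unfold shSet
  split_ifs with h
  · rw [card_insert_of_notMem (by simp [h.2]), card_erase_of_mem h.1]
    have := card_pos.2 ⟨j, h.1⟩
    omega
  · rfl

lemma shSet_inj {i j : ℕ} {A B : Finset ℕ} (hA : shSet i j A ≠ A) (hB : shSet i j B ≠ B)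
    (h : shSet i j A = shSet i j B) : A = B := by
  unfold shSet at *
  split_ifs at * with h1 h2
  · have e1 : ∀ A : Finset ℕ, j ∈ A ∧ i ∉ A → insert j ((insert i (A.erase j)).erase i) = A := by
      intro A hA
      have hij : i ≠ j := by rintro rfl; exact hA.2 hA.1
      ext x; simp only [mem_insert, mem_erase]
      by_cases hx : x = j
      · simp [hx, hA.1]
      · by_cases hxi : x = i
        · subst hxi; simp [hx, hA.2]
        · simp [hx, hxi]
    rw [← e1 A h1, ← e1 B h2, h]
  all_goals simp_all

lemma shFam_injOn (i j : ℕ) (F : Finset (Finset ℕ)) :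
    Set.InjOn (fun A => if shSet i j A ∈ F then A else shSet i j A) (F : Set (Finset ℕ)) := by
  intro A hA B hB h
  have hA' : A ∈ F := hA
  have hB' : B ∈ F := hB
  simp only at h
  split_ifs at h with h1 h2 h2
  · exact h
  · exact absurd (h ▸ hA') h2
  · exact absurd (h.symm ▸ hB') h1
  · apply shSet_inj _ _ h
    · intro e; rw [e] at h1; exact h1 hA'
    · intro e; rw [e] at h2; exact h2 hB'

lemma shFam_card (i j : ℕ) (F : Finset (Finset ℕ)) : (shFam i j F).card = F.card :=
  card_image_of_injOn (shFam_injOn i j F)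

lemma shFam_subset {n k i j : ℕ} (hij : i < j) {F : Finset (Finset ℕ)}
    (hF : F ⊆ (range n).powersetCard k) : shFam i j F ⊆ (range n).powersetCard k := by
  intro A hA
  simp only [shFam, mem_image] at hA
  obtain ⟨B, hB, rfl⟩ := hA
  split_ifs with h
  · exact hF hB
  · have hB' := mem_powersetCard.1 (hF hB)
    rw [mem_powersetCard, shSet_card]
    refine ⟨?_, hB'.2⟩
    unfold shSet
    split_ifs with h2
    · intro x hx
      rcases mem_insert.1 hx with rfl | hx
      · have := mem_range.1 (hB'.1 h2.1); exact mem_range.2 (by omega)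
      · exact hB'.1 (mem_of_mem_erase hx)
    · exact hB'.1

lemma mem_shFam_cases {i j : ℕ} {F : Finset (Finset ℕ)} {A : Finset ℕ} (h : A ∈ shFam i j F) :
    (A ∈ F ∧ (j ∈ A → i ∉ A → insert i (A.erase j) ∈ F)) ∨
    (A ∉ F ∧ i ∈ A ∧ j ∉ A ∧ insert j (A.erase i) ∈ F) := by
  simp only [shFam, mem_image] at h
  obtain ⟨B, hB, rfl⟩ := h
  split_ifs with h
  · left
    refine ⟨hB, fun h1 h2 => ?_⟩
    rwa [shSet, if_pos ⟨h1, h2⟩] at h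
  · right
    refine ⟨h, ?_⟩
    by_cases h2 : j ∈ B ∧ i ∉ B
    · rw [shSet, if_pos h2]
      have hij : i ≠ j := by rintro rfl; exact h2.2 h2.1
      refine ⟨by simp, by simp [hij.symm], ?_⟩
      convert hB using 1
      ext x; simp only [mem_insert, mem_erase]
      by_cases hx : x = j
      · simp [hx, h2.1]
      · by_cases hxi : x = i
        · subst hxi; simp [hx, h2.2]
        · simp [hx, hxi]
    · rw [shSet, if_neg h2] at h; exact absurd hB h

lemma shFam_NM {i j s : ℕ} (hij : i ≠ j) {F : Finset (Finset ℕ)} (hF : NM F s) :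
    NM (shFam i j F) s := by
  intro f hf hd
  by_cases hall : ∀ a, f a ∈ F
  · exact hF f hall hd
  push Not at hall
  obtain ⟨a0, ha0⟩ := hall
  obtain ⟨h1, h2, h3⟩ : i ∈ f a0 ∧ j ∉ f a0 ∧ insert j ((f a0).erase i) ∈ F := by
    rcases mem_shFam_cases (hf a0) with h | h
    · exact absurd h.1 ha0
    · exact h.2
  have hni : ∀ a, a ≠ a0 → i ∉ f a := fun a ha hi =>
    (disjoint_left.1 (hd a a0 ha) hi) h1
  refine hF (fun a => (f a).map (Equiv.swap i j).toEmbedding) ?_ ?_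
  · intro a
    by_cases ha : a = a0
    · subst ha
      convert h3 using 1
      ext x
      simp only [mem_map_equiv, Equiv.symm_swap, mem_insert, mem_erase]
      by_cases hx : x = j
      · simp [hx, h1]
      · by_cases hxi : x = i
        · subst hxi; simp [hx, h2]
        · simp [hx, hxi, Equiv.swap_apply_of_ne_of_ne hxi hx]
    · have hi := hni a ha
      rcases mem_shFam_cases (hf a) with h | h
      · by_cases hj : j ∈ f a
        · convert h.2 hj hi using 1
          ext x
          simp only [mem_map_equiv, Equiv.symm_swap, mem_insert, mem_erase]
          by_cases hx : x = j
          · subst hx; simp [hi, hij.symm]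
          · by_cases hxi : x = i
            · subst hxi; simp [hj]
            · simp [hx, hxi, Equiv.swap_apply_of_ne_of_ne hxi hx]
        · convert h.1 using 1
          ext x
          simp only [mem_map_equiv, Equiv.symm_swap]
          by_cases hx : x = j
          · subst hx; simp [hi, hj]
          · by_cases hxi : x = i
            · subst hxi; simp [hi, hj]
            · simp [Equiv.swap_apply_of_ne_of_ne hxi hx]
      · exact absurd h.2.1 hi
  · intro a b hab
    exact (disjoint_map _).2 (hd a b hab)

lemma exists_shifted (n k s : ℕ) : ∀ (w : ℕ) (F : Finset (Finset ℕ)),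
    ∑ A ∈ F, ∑ x ∈ A, x = w → F ⊆ (range n).powersetCard k → NM F s →
    ∃ F' : Finset (Finset ℕ), F' ⊆ (range n).powersetCard k ∧ NM F' s ∧ F'.card = F.card ∧ Shf F' := by
  intro w
  induction w using Nat.strong_induction_on with
  | _ w ih =>
    intro F hw hF hN
    by_cases hS : Shf F
    · exact ⟨F, hF, hN, rfl, hS⟩
    unfold Shf at hS
    push Not at hS
    obtain ⟨A, hA, i, j, hij, hj, hi, hnot⟩ := hS
    have hle : ∀ B : Finset ℕ, ∑ x ∈ shSet i j B, x ≤ ∑ x ∈ B, x := by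
      intro B
      unfold shSet
      split_ifs with h
      · rw [sum_insert (by simp [h.2])]
        have := add_sum_erase B (fun x => x) h.1
        omega
      · exact le_rfl
    have hlt : ∑ B ∈ shFam i j F, ∑ x ∈ B, x < w := by
      rw [← hw, shFam, sum_image (shFam_injOn i j F)]
      apply sum_lt_sum
      · intro B _
        split_ifs
        · exact le_rfl
        · exact hle B
      · refine ⟨A, hA, ?_⟩
        have e : shSet i j A = insert i (A.erase j) := by rw [shSet, if_pos ⟨hj, hi⟩]
        rw [e, if_neg hnot, sum_insert (by simp [hi])]
        have := add_sum_erase A (fun x => x) hj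
        omega
    obtain ⟨F', h1, h2, h3, h4⟩ := ih _ hlt (shFam i j F) rfl (shFam_subset hij hF)
      (shFam_NM hij.ne hN)
    exact ⟨F', h1, h2, h3.trans (shFam_card i j F), h4⟩

/-- domination lemma -/
lemma dom_mem {F : Finset (Finset ℕ)} (hS : Shf F) {A : Finset ℕ} : ∀ (c : ℕ) (B : Finset ℕ),
    (B \ A).card = c → B ∈ F → A.card = B.card →
    (∀ x, (B.filter (· < x)).card ≤ (A.filter (· < x)).card) → A ∈ F := by
  intro c
  induction c with
  | zero =>
    intro B h0 hB hc _
    have : B ⊆ A := by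
      rw [card_eq_zero] at h0; exact sdiff_eq_empty_iff_subset.1 h0
    rw [← eq_of_subset_of_card_le this hc.le]; exact hB
  | succ c ih =>
    intro B h0 hB hc hx
    have hne : (B \ A).Nonempty := card_pos.1 (by omega)
    have hcard : (A \ B).card = (B \ A).card := by
      have h1 := card_sdiff_add_card_inter A B
      have h2 := card_sdiff_add_card_inter B A
      rw [inter_comm] at h2
      omega
    have hne' : (A \ B).Nonempty := card_pos.1 (by omega)
    set j := (B \ A).min' hne with hj
    set i := (A \ B).min' hne' with hi
    have hjm := mem_sdiff.1 ((B \ A).min'_mem hne)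
    have him := mem_sdiff.1 ((A \ B).min'_mem hne')
    rw [← hj] at hjm
    rw [← hi] at him
    have hjmin : ∀ y, y ∈ B → y ∉ A → j ≤ y := fun y h1 h2 => min'_le _ _ (mem_sdiff.2 ⟨h1, h2⟩)
    have himin : ∀ y, y ∈ A → y ∉ B → i ≤ y := fun y h1 h2 => min'_le _ _ (mem_sdiff.2 ⟨h1, h2⟩)
    have hij : i < j := by
      by_contra hcon
      have hne2 : i ≠ j := by intro e; rw [e] at him; exact him.2 hjm.1
      have hlt : j < i := by omega
      have hsub : A.filter (· < j+1) ⊂ B.filter (· < j+1) := by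
        rw [ssubset_iff_of_subset]
        · exact ⟨j, by simp [hjm.1], by simp [hjm.2]⟩
        · intro y hy
          rw [mem_filter] at hy ⊢
          refine ⟨?_, hy.2⟩
          by_contra hyB
          have := himin y hy.1 hyB
          omega
      exact absurd (card_lt_card hsub) (not_lt.2 (hx _))
    refine ih (insert i (B.erase j)) ?_ (hS B hB i j hij hjm.1 him.2) ?_ ?_
    · have : insert i (B.erase j) \ A = (B \ A).erase j := by
        ext y; simp only [mem_sdiff, mem_insert, mem_erase]
        constructor
        · rintro ⟨rfl | h, h2⟩
          · exact absurd him.1 h2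
          · exact ⟨h.1, h.2, h2⟩
        · rintro ⟨h1, h2, h3⟩; exact ⟨Or.inr ⟨h1, h2⟩, h3⟩
      rw [this, card_erase_of_mem (mem_sdiff.2 hjm)]; omega
    · rw [hc, card_insert_of_notMem (by simp [him.2]), card_erase_of_mem hjm.1]
      have := card_pos.2 ⟨j, hjm.1⟩
      omega
    · intro x
      by_cases h1 : x ≤ i
      · refine le_trans (card_le_card ?_) (hx x)
        intro y; simp only [mem_filter, mem_insert, mem_erase]
        rintro ⟨rfl | h, h2⟩
        · omega
        · exact ⟨h.2, h2⟩
      · by_cases h2 : x ≤ j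
        · apply card_le_card
          intro y; simp only [mem_filter, mem_insert, mem_erase]
          rintro ⟨rfl | h, h3⟩
          · exact ⟨him.1, h3⟩
          · refine ⟨?_, h3⟩
            by_contra hyA
            have := hjmin y h.2 hyA
            omega
        · refine le_trans ?_ (hx x)
          have e : (insert i (B.erase j)).filter (· < x) = insert i ((B.filter (· < x)).erase j) := by
            ext y; simp only [mem_filter, mem_insert, mem_erase]
            constructor
            · rintro ⟨rfl | h, h3⟩
              · left; rfl
              · right; exact ⟨h.1, h.2, h3⟩
            · rintro (rfl | h)
              · exact ⟨Or.inl rfl, by omega⟩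
              · exact ⟨Or.inr ⟨h.1, h.2.1⟩, h.2.2⟩
          have hjx : j ∈ B.filter (· < x) := mem_filter.2 ⟨hjm.1, by omega⟩
          rw [e, card_insert_of_notMem (by simp [him.2]), card_erase_of_mem hjx]
          have := card_pos.2 ⟨j, hjx⟩
          omega

def Full (F : Finset (Finset ℕ)) (k m : ℕ) : Prop :=
  ∀ A : Finset ℕ, A.card = k → (∀ i, 1 ≤ i → i ≤ k → i ≤ (A.filter (· < i*m)).card) → A ∈ F

lemma cnt_mono (A : Finset ℕ) {x y : ℕ} (h : x ≤ y) :
    (A.filter (· < x)).card ≤ (A.filter (· < y)).card := by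
  apply card_le_card
  intro z; simp only [mem_filter]; rintro ⟨h1, h2⟩; exact ⟨h1, by omega⟩

lemma not_full_good {F : Finset (Finset ℕ)} (hS : Shf F) {k m : ℕ} (hk : 1 ≤ k)
    (hu : ∀ A ∈ F, A.card = k) (hnf : ¬ Full F k (m+1)) {A : Finset ℕ} (hA : A ∈ F) :
    ∃ i, 1 ≤ i ∧ i ≤ k ∧ i ≤ (A.filter (· < i*(m+1) - 1)).card := by
  by_contra hcon
  push Not at hcon
  apply hnf
  intro A0 hc h0
  refine dom_mem hS _ A rfl hA (by rw [hc, hu A hA]) ?_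
  intro x
  by_cases hj : k ≤ x / (m+1)
  · have h1 : k ≤ (A0.filter (· < x)).card := by
      refine le_trans (h0 k hk le_rfl) (cnt_mono _ ?_)
      exact (Nat.le_div_iff_mul_le (Nat.succ_pos m)).1 hj
    refine le_trans ?_ h1
    rw [← hu A hA]; exact card_filter_le _ _
  · push Not at hj
    have h1 : (A.filter (· < x)).card ≤ x / (m+1) := by
      have h2 := hcon (x/(m+1) + 1) (Nat.le_add_left 1 _) hj
      have h3 : x ≤ (x/(m+1)+1)*(m+1) - 1 := by
        have h4 : x < (x/(m+1)+1)*(m+1) := by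
          have := Nat.lt_mul_div_succ x (show 0 < m+1 by omega)
          rw [mul_comm]; exact this
        omega
      have := cnt_mono A h3
      omega
    refine le_trans h1 ?_
    by_cases h0' : x/(m+1) = 0
    · omega
    · exact le_trans (h0 _ (by omega) (by omega)) (cnt_mono _ (Nat.div_mul_le_self _ _))

lemma katona {F : Finset (Finset ℕ)} (hS : Shf F) {k m : ℕ} (hk : 1 ≤ k)
    (hu : ∀ A ∈ F, A.card = k) (hnf : ¬ Full F k (m+1)) : F.card ≤ m * (F.shadow).card := by
  classical
  set iF : Finset ℕ → ℕ := fun A =>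
    Nat.findGreatest (fun i => i ≤ (A.filter (· < i*(m+1) - 1)).card) k with hiF
  set jL : Finset ℕ → ℕ := fun A =>
    Nat.findGreatest (fun i => i ≤ (A.filter (· < i*(m+1) - 1)).card + 1) k with hjL
  have hi1 : ∀ A ∈ F, 1 ≤ iF A ∧ iF A ≤ k ∧ (A.filter (· < (iF A)*(m+1) - 1)).card = iF A ∧
      ∀ i, iF A < i → i ≤ k → (A.filter (· < i*(m+1) - 1)).card < i := by
    intro A hA
    obtain ⟨i, h1, h2, h3⟩ := not_full_good hS hk hu hnf hA
    have hle : i ≤ iF A := Nat.le_findGreatest h2 h3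
    have hk' : iF A ≤ k := Nat.findGreatest_le k
    have hsp : iF A ≤ (A.filter (· < (iF A)*(m+1) - 1)).card :=
      Nat.findGreatest_spec (P := fun i => i ≤ (A.filter (· < i*(m+1) - 1)).card) h2 h3
    have hgt : ∀ i, iF A < i → i ≤ k → (A.filter (· < i*(m+1) - 1)).card < i := by
      intro i h4 h5
      have := Nat.findGreatest_is_greatest (P := fun i => i ≤ (A.filter (· < i*(m+1) - 1)).card) h4 h5
      simpa using this
    refine ⟨by omega, hk', le_antisymm ?_ hsp, hgt⟩
    by_contra hcon
    have hcA : (A.filter (· < (iF A)*(m+1) - 1)).card ≤ k := by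
      rw [← hu A hA]; exact card_filter_le _ _
    have h6 := hgt (iF A + 1) (by omega) (by omega)
    have h7 := cnt_mono A (show (iF A)*(m+1) - 1 ≤ (iF A + 1)*(m+1) - 1 by
      apply Nat.sub_le_sub_right; apply Nat.mul_le_mul_right; omega)
    omega
  have key : ∀ i, 1 ≤ i → i ≤ k →
      (F.filter (fun A => iF A = i)).card ≤ m * ((F.shadow).filter (fun L => jL L = i)).card := by
    intro i h1 hik
    have := card_mul_le_card_mul (s := F.filter (fun A => iF A = i))
      (t := (F.shadow).filter (fun L => jL L = i))
      (fun A L => ∃ x ∈ A, x < i*(m+1) - 1 ∧ L = A.erase x) (m := i) (n := m * i) ?_ ?_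
    · have h2 : i * (F.filter (fun A => iF A = i)).card ≤
          i * (m * ((F.shadow).filter (fun L => jL L = i)).card) := by
        nlinarith
      exact Nat.le_of_mul_le_mul_left h2 (by omega)
    · intro A hA
      rw [mem_filter] at hA
      obtain ⟨g1, g2, g3, g4⟩ := hi1 A hA.1
      rw [hA.2] at g1 g2 g3 g4
      calc i = (A.filter (· < i*(m+1) - 1)).card := g3.symm
        _ = ((A.filter (· < i*(m+1) - 1)).image (fun x => A.erase x)).card := by
          rw [card_image_of_injOn]
          intro x hx y hy hxy
          simp only [coe_filter, Set.mem_ofPred_eq] at hx hy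
          by_contra hne
          have : x ∈ A.erase y := mem_erase.2 ⟨hne, hx.1⟩
          simp only at hxy
          rw [← hxy] at this
          simp at this
        _ ≤ _ := by
          apply card_le_card
          intro L hL
          rw [mem_image] at hL
          obtain ⟨x, hx, rfl⟩ := hL
          rw [mem_filter] at hx
          rw [mem_bipartiteAbove, mem_filter]
          refine ⟨⟨mem_shadow_iff.2 ⟨A, hA.1, x, hx.1, rfl⟩, ?_⟩, x, hx.1, hx.2, rfl⟩
          have hcnt : ∀ j, i ≤ j → ((A.erase x).filter (· < j*(m+1)-1)).card + 1 =
              (A.filter (· < j*(m+1)-1)).card := by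
            intro j hij
            have hxm : x ∈ A.filter (· < j*(m+1)-1) := by
              rw [mem_filter]
              refine ⟨hx.1, lt_of_lt_of_le hx.2 ?_⟩
              apply Nat.sub_le_sub_right; apply Nat.mul_le_mul_right; omega
            rw [filter_erase, card_erase_of_mem hxm]
            have := card_pos.2 ⟨x, hxm⟩
            omega
          rw [hjL]
          simp only
          rw [Nat.findGreatest_eq_iff]
          refine ⟨hik, fun _ => ?_, fun n hn hnk => ?_⟩
          · rw [hcnt i le_rfl]; omega
          · rw [hcnt n (by omega)]
            have := g4 n hn hnk
            omega
    · intro L hL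
      rw [mem_filter] at hL
      have hj : i ≤ (L.filter (· < i*(m+1) - 1)).card + 1 := by
        have := Nat.findGreatest_eq_iff.1 hL.2
        exact this.2.1 (by omega)
      calc _ ≤ (((range (i*(m+1)-1)) \ (L.filter (· < i*(m+1) - 1))).image (fun x => insert x L)).card := by
            apply card_le_card
            intro A hA
            rw [mem_bipartiteBelow] at hA
            obtain ⟨hA1, x, hxA, hxlt, rfl⟩ := hA
            rw [mem_image]
            refine ⟨x, ?_, insert_erase hxA⟩
            simp [hxlt]
        _ ≤ _ := card_image_le
        _ = i*(m+1) - 1 - (L.filter (· < i*(m+1) - 1)).card := by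
            rw [card_sdiff_of_subset, card_range]
            intro x hx
            rw [mem_filter] at hx
            exact mem_range.2 hx.2
        _ ≤ m * i := by
            have : i*(m+1) = m*i + i := by ring
            omega
  calc F.card = ∑ i ∈ Icc 1 k, (F.filter (fun A => iF A = i)).card := by
        apply card_eq_sum_card_fiberwise
        intro A hA
        have := hi1 A hA
        simp only [coe_Icc, Set.mem_Icc]
        exact ⟨this.1, this.2.1⟩
    _ ≤ ∑ i ∈ Icc 1 k, m * ((F.shadow).filter (fun L => jL L = i)).card := by
        apply sum_le_sum
        intro i hi
        rw [mem_Icc] at hi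
        exact key i hi.1 hi.2
    _ = m * ∑ i ∈ Icc 1 k, ((F.shadow).filter (fun L => jL L = i)).card := by rw [mul_sum]
    _ ≤ m * (F.shadow).card := by
        apply Nat.mul_le_mul_left
        rw [← card_biUnion]
        · apply card_le_card
          intro L
          simp only [mem_biUnion, mem_filter]
          rintro ⟨_, _, h, _⟩
          exact h
        · intro a _ b _ hab
          simp only [Function.onFun]
          rw [disjoint_left]
          intro L h1 h2
          rw [mem_filter] at h1 h2
          exact hab (h1.2.symm.trans h2.2)

lemma full_matching {F : Finset (Finset ℕ)} {k m a : ℕ} (hk : 1 ≤ k) (hF : Full F k m)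
    (V : Finset ℕ) (hV : ∀ i, 1 ≤ i → i ≤ k → i * a ≤ (V.filter (· < i*m)).card) :
    ∃ f : Fin a → Finset ℕ, (∀ j, f j ∈ F) ∧ (∀ j, f j ⊆ V) ∧ ∀ i j, i ≠ j → Disjoint (f i) (f j) := by
  classical
  set p : ℕ → Prop := fun x => x ∈ V with hp
  have hfin : (Set.ofPred p).Finite := V.finite_toSet
  have hcard : hfin.toFinset = V := by ext x; simp [hp]
  have hncard : (Set.ofPred p).ncard = V.card := by
    rw [Set.ncard_eq_toFinset_card _ hfin, hcard]
  have hcount : ∀ x, Nat.count p x = (V.filter (· < x)).card := by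
    intro x
    rw [Nat.count_eq_card_filter_range]
    congr 1
    ext y; simp [hp, and_comm]
  have hVc : k * a ≤ V.card := le_trans (hV k hk le_rfl) (card_filter_le _ _)
  have hinj : ∀ c d, c < V.card → d < V.card → Nat.nth p c = Nat.nth p d → c = d := by
    intro c d hc hd h
    exact Nat.nth_injOn hfin (by rw [Set.mem_Iio, hcard]; exact hc) (by rw [Set.mem_Iio, hcard]; exact hd) h
  have hidx : ∀ (j : Fin a) i, i < k → (j : ℕ) + i * a < k * a := by
    intro j i hi
    have h1 := j.2
    have : (i+1)*a ≤ k * a := Nat.mul_le_mul_right _ hi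
    nlinarith
  have huniq : ∀ (j j' : Fin a) i i', (j : ℕ) + i * a = j' + i' * a → j = j' ∧ i = i' := by
    intro j j' i i' h
    have h1 := j.2
    have h2 := j'.2
    have e1 : ((j : ℕ) + i * a) % a = j := by rw [Nat.add_mul_mod_self_right, Nat.mod_eq_of_lt h1]
    have e2 : ((j' : ℕ) + i' * a) % a = j' := by rw [Nat.add_mul_mod_self_right, Nat.mod_eq_of_lt h2]
    have e3 : (j : ℕ) = j' := by rw [← e1, ← e2, h]
    refine ⟨Fin.ext e3, ?_⟩
    rw [e3] at h
    exact Nat.eq_of_mul_eq_mul_right (by omega) (by omega : i * a = i' * a)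
  refine ⟨fun j => (range k).image (fun i => Nat.nth p (j + i * a)), ?_, ?_, ?_⟩
  · intro j
    have hio : Set.InjOn (fun i => Nat.nth p ((j : ℕ) + i * a)) (range k : Set ℕ) := by
      intro x hx y hy hxy
      simp only [coe_range, Set.mem_Iio] at hx hy
      have := hinj _ _ (lt_of_lt_of_le (hidx j x hx) hVc) (lt_of_lt_of_le (hidx j y hy) hVc) hxy
      exact (huniq j j x y this).2
    apply hF
    · rw [card_image_of_injOn hio, card_range]
    · intro i h1 h2
      calc i = ((range i).image (fun i => Nat.nth p ((j : ℕ) + i * a))).card := by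
            rw [card_image_of_injOn, card_range]
            apply hio.mono
            intro x; simp only [coe_range, Set.mem_Iio]; omega
        _ ≤ _ := by
            apply card_le_card
            intro y hy
            rw [mem_image] at hy
            obtain ⟨c, hc, rfl⟩ := hy
            rw [mem_range] at hc
            rw [mem_filter]
            refine ⟨mem_image.2 ⟨c, mem_range.2 (by omega), rfl⟩, ?_⟩
            apply Nat.nth_lt_of_lt_count
            rw [hcount]
            refine lt_of_lt_of_le ?_ (hV i h1 h2)
            have h1 := j.2
            have : (c+1)*a ≤ i * a := Nat.mul_le_mul_right _ hc
            nlinarith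
  · intro j y hy
    simp only [mem_image, mem_range] at hy
    obtain ⟨c, hc, rfl⟩ := hy
    exact Nat.nth_mem_of_lt_card hfin (by rw [hcard]; exact lt_of_lt_of_le (hidx j c hc) hVc)
  · intro i j hij
    rw [disjoint_left]
    intro y h1 h2
    simp only [mem_image, mem_range] at h1 h2
    obtain ⟨c, hc, rfl⟩ := h1
    obtain ⟨d, hd, h⟩ := h2
    have := hinj _ _ (lt_of_lt_of_le (hidx j d hd) hVc) (lt_of_lt_of_le (hidx i c hc) hVc) h
    exact hij (huniq j i d c this).1.symm

def Dc (F G : Finset (Finset ℕ)) : ℕ := ((F ×ˢ G).filter (fun z => Disjoint z.1 z.2)).card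

def tl0 (N : ℕ) (F : Finset (Finset ℕ)) : Finset (Finset ℕ) := F.filter (fun A => N ∉ A)
def tl1 (N : ℕ) (F : Finset (Finset ℕ)) : Finset (Finset ℕ) :=
  (F.filter (fun A => N ∈ A)).image (fun A => A.erase N)

lemma erase_injOn_mem (N : ℕ) (F : Finset (Finset ℕ)) :
    Set.InjOn (fun A : Finset ℕ => A.erase N) (F.filter (fun A => N ∈ A) : Set (Finset ℕ)) := by
  intro A hA B hB h
  simp only [coe_filter, Set.mem_ofPred_eq] at hA hB h
  rw [← insert_erase hA.2, ← insert_erase hB.2, h]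

lemma tl_card (N : ℕ) (F : Finset (Finset ℕ)) : F.card = (tl0 N F).card + (tl1 N F).card := by
  unfold tl0 tl1
  rw [card_image_of_injOn (erase_injOn_mem N F), add_comm]
  exact (card_filter_add_card_filter_not (s := F) (fun A => N ∈ A)).symm

lemma tl0_sub {N l : ℕ} {F : Finset (Finset ℕ)} (hF : F ⊆ (range (N+1)).powersetCard l) :
    tl0 N F ⊆ (range N).powersetCard l := by
  intro A hA
  simp only [tl0, mem_filter] at hA
  have := mem_powersetCard.1 (hF hA.1)
  refine mem_powersetCard.2 ⟨?_, this.2⟩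
  intro x hx
  have h1 := mem_range.1 (this.1 hx)
  have h2 : x ≠ N := by rintro rfl; exact hA.2 hx
  exact mem_range.2 (by omega)

lemma tl1_sub {N l : ℕ} {F : Finset (Finset ℕ)} (hF : F ⊆ (range (N+1)).powersetCard (l+1)) :
    tl1 N F ⊆ (range N).powersetCard l := by
  intro A hA
  simp only [tl1, mem_image, mem_filter] at hA
  obtain ⟨B, ⟨hB, hN⟩, rfl⟩ := hA
  have := mem_powersetCard.1 (hF hB)
  refine mem_powersetCard.2 ⟨?_, by rw [card_erase_of_mem hN, this.2]; rfl⟩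
  intro x hx
  rw [mem_erase] at hx
  have h1 := mem_range.1 (this.1 hx.2)
  exact mem_range.2 (by omega)

lemma tl0_shf {N : ℕ} {F : Finset (Finset ℕ)} {l : ℕ} (hF : F ⊆ (range (N+1)).powersetCard l)
    (hS : Shf F) : Shf (tl0 N F) := by
  intro A hA i j hij hj hi
  have hj' := mem_range.1 ((mem_powersetCard.1 (tl0_sub hF hA)).1 hj)
  simp only [tl0, mem_filter] at hA ⊢
  refine ⟨hS A hA.1 i j hij hj hi, ?_⟩
  simp only [mem_insert, mem_erase, not_or, not_and]
  exact ⟨by omega, fun _ => hA.2⟩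

lemma tl1_shf {N : ℕ} {F : Finset (Finset ℕ)} {l : ℕ} (hF : F ⊆ (range (N+1)).powersetCard (l+1))
    (hS : Shf F) : Shf (tl1 N F) := by
  intro A hA i j hij hj hi
  have hj' := mem_range.1 ((mem_powersetCard.1 (tl1_sub hF hA)).1 hj)
  simp only [tl1, mem_image, mem_filter] at hA ⊢
  obtain ⟨B, ⟨hB, hN⟩, rfl⟩ := hA
  refine ⟨insert i (B.erase j), ⟨hS B hB i j hij (mem_of_mem_erase hj) ?_, ?_⟩, ?_⟩
  · intro h; exact hi (mem_erase.2 ⟨by omega, h⟩)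
  · simp only [mem_insert, mem_erase]; right; exact ⟨by omega, hN⟩
  · ext x; simp only [mem_erase, mem_insert]
    constructor
    · rintro ⟨h1, h2 | h2⟩
      · left; exact h2
      · right; exact ⟨h2.1, h1, h2.2⟩
    · rintro (h2 | h2)
      · exact ⟨by omega, Or.inl h2⟩
      · exact ⟨h2.2.1, Or.inr ⟨h2.1, h2.2.2⟩⟩

lemma tl_dens {N : ℕ} {F : Finset (Finset ℕ)} {l : ℕ} (hF : F ⊆ (range (N+1)).powersetCard (l+1))
    (hS : Shf F) : (tl1 N F).card * (N - l) ≤ (tl0 N F).card * (l+1) := by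
  classical
  refine card_mul_le_card_mul (s := tl1 N F) (t := tl0 N F) (fun B A => B ⊆ A) ?_ ?_
  · intro B hB
    have hB' := mem_powersetCard.1 (tl1_sub hF hB)
    calc N - l = (range N \ B).card := by rw [card_sdiff_of_subset hB'.1, card_range, hB'.2]
      _ = ((range N \ B).image (fun x => insert x B)).card := by
        rw [card_image_of_injOn]
        intro x hx y hy hxy
        simp only [coe_sdiff, Set.mem_sdiff, mem_coe] at hx hy hxy
        have : x ∈ insert y B := hxy ▸ mem_insert_self x B
        rw [mem_insert] at this
        exact this.resolve_right hx.2
      _ ≤ _ := by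
        apply card_le_card
        intro A hA
        simp only [mem_image, mem_sdiff, mem_range] at hA
        obtain ⟨x, ⟨hx, hxB⟩, rfl⟩ := hA
        rw [mem_bipartiteAbove]
        refine ⟨?_, subset_insert _ _⟩
        simp only [tl1, mem_image, mem_filter] at hB
        obtain ⟨C, ⟨hC, hN⟩, rfl⟩ := hB
        simp only [tl0, mem_filter]
        refine ⟨hS C hC x N hx hN ?_, ?_⟩
        · intro h; exact hxB (mem_erase.2 ⟨by omega, h⟩)
        · simp; omega
  · intro A hA
    have hA' := mem_powersetCard.1 (tl0_sub hF hA)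
    calc _ ≤ (A.powersetCard l).card := by
          apply card_le_card
          intro B hB
          rw [mem_bipartiteBelow] at hB
          exact mem_powersetCard.2 ⟨hB.2, (mem_powersetCard.1 (tl1_sub hF hB.1)).2⟩
      _ = l+1 := by rw [card_powersetCard, hA'.2]; simp

lemma Dc_le (F G : Finset (Finset ℕ)) : Dc F G ≤ F.card * G.card := by
  unfold Dc
  rw [← card_product]
  exact card_filter_le _ _

lemma Dc_split (N : ℕ) (F G : Finset (Finset ℕ)) :
    Dc F G ≤ Dc (tl0 N F) (tl0 N G) + Dc (tl1 N F) (tl0 N G) + Dc (tl0 N F) (tl1 N G) := by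
  classical
  set W := (F ×ˢ G).filter (fun z => Disjoint z.1 z.2) with hW
  have h0 : W ⊆ (W.filter (fun z => N ∉ z.1 ∧ N ∉ z.2)) ∪ (W.filter (fun z => N ∈ z.1 ∧ N ∉ z.2)) ∪
      (W.filter (fun z => N ∉ z.1 ∧ N ∈ z.2)) := by
    intro z hz
    have hd : Disjoint z.1 z.2 := (mem_filter.1 hz).2
    simp only [mem_union, mem_filter]
    by_cases h1 : N ∈ z.1
    · have h2 : N ∉ z.2 := disjoint_left.1 hd h1
      tauto
    · tauto
  have h1 := (card_le_card h0).trans (card_union_le _ _)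
  have h2 := card_union_le (W.filter (fun z => N ∉ z.1 ∧ N ∉ z.2)) (W.filter (fun z => N ∈ z.1 ∧ N ∉ z.2))
  have a0 : (W.filter (fun z => N ∉ z.1 ∧ N ∉ z.2)).card ≤ Dc (tl0 N F) (tl0 N G) := by
    apply card_le_card
    intro z
    simp only [hW, mem_filter, mem_product, tl0]; tauto
  have a1 : (W.filter (fun z => N ∈ z.1 ∧ N ∉ z.2)).card ≤ Dc (tl1 N F) (tl0 N G) := by
    apply card_le_card_of_injOn (fun z => (z.1.erase N, z.2))
    · intro z hz
      simp only [hW, coe_filter, mem_filter, mem_product, Set.mem_ofPred_eq, tl0, tl1, mem_image] at hz ⊢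
      obtain ⟨⟨⟨hF, hG⟩, hd⟩, h1, h2⟩ := hz
      exact ⟨⟨⟨z.1, ⟨hF, h1⟩, rfl⟩, hG, h2⟩, hd.mono_left (erase_subset _ _)⟩
    · intro z hz w hw h
      simp only [coe_filter, Set.mem_ofPred_eq] at hz hw
      simp only [Prod.mk.injEq] at h
      ext1
      · rw [← insert_erase hz.2.1, ← insert_erase hw.2.1, h.1]
      · exact h.2
  have a2 : (W.filter (fun z => N ∉ z.1 ∧ N ∈ z.2)).card ≤ Dc (tl0 N F) (tl1 N G) := by
    apply card_le_card_of_injOn (fun z => (z.1, z.2.erase N))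
    · intro z hz
      simp only [hW, coe_filter, mem_filter, mem_product, Set.mem_ofPred_eq, tl0, tl1, mem_image] at hz ⊢
      obtain ⟨⟨⟨hF, hG⟩, hd⟩, h1, h2⟩ := hz
      exact ⟨⟨⟨hF, h1⟩, z.2, ⟨hG, h2⟩, rfl⟩, hd.mono_right (erase_subset _ _)⟩
    · intro z hz w hw h
      simp only [coe_filter, Set.mem_ofPred_eq] at hz hw
      simp only [Prod.mk.injEq] at h
      ext1
      · exact h.1
      · rw [← insert_erase hz.2.2, ← insert_erase hw.2.2, h.2]
  have : Dc F G = W.card := rfl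
  omega

lemma Dc_alg (f0 f1 g0 g1 p q r X Y : ℕ) (dF : f1 * (q+1+r) ≤ f0 * (p+1))
    (dG : g1 * (p+1+r) ≤ g0 * (q+1)) :
    (p+q+1+r+1) * (r * (f0 * g0 * X * Y) + f1 * g0 * ((q+r+1) * X) * Y +
          f0 * g1 * X * ((p+r+1) * Y)) ≤
      (f0+f1) * (g0+g1) * ((q+r+1) * X) * ((p+r+1) * Y) := by
  zify at *
  have hh : (0:ℤ) ≤ ((f0:ℤ) * (p+1) - f1 * (q+1+r)) * (g0 * (q+1) - g1 * (p+1+r)) :=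
    mul_nonneg (by linarith) (by linarith)
  have hXY : (0:ℤ) ≤ (X:ℤ) * Y := by positivity
  have h3 := mul_nonneg hh hXY
  rw [← sub_nonneg]
  refine h3.trans_eq ?_
  ring

open Nat in
lemma Dc_bound : ∀ (N p q : ℕ) (F G : Finset (Finset ℕ)), F ⊆ (range N).powersetCard p →
    G ⊆ (range N).powersetCard q → Shf F → Shf G → p + q ≤ N →
    Dc F G * (N - p - q)! * N ! ≤ F.card * G.card * (N-p)! * (N-q)! := by
  intro N
  induction N with
  | zero =>
    intro p q F G hF hG _ _ hpq
    have := Dc_le F G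
    obtain ⟨rfl, rfl⟩ : p = 0 ∧ q = 0 := by omega
    simpa using this
  | succ N ih =>
    intro p q F G hF hG hSF hSG hpq
    have hle := Dc_le F G
    rcases Nat.eq_zero_or_pos p with rfl | hp
    · simp only [Nat.sub_zero]
      calc _ = Dc F G * ((N+1)! * (N+1-q)!) := by ring
        _ ≤ F.card * G.card * ((N+1)! * (N+1-q)!) := Nat.mul_le_mul_right _ hle
        _ = _ := by ring
    rcases Nat.eq_zero_or_pos q with rfl | hq
    · simp only [Nat.sub_zero]
      calc _ = Dc F G * ((N+1)! * (N+1-p)!) := by ring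
        _ ≤ F.card * G.card * ((N+1)! * (N+1-p)!) := Nat.mul_le_mul_right _ hle
        _ = _ := by ring
    obtain ⟨p, rfl⟩ : ∃ p', p = p' + 1 := ⟨p-1, by omega⟩
    obtain ⟨q, rfl⟩ : ∃ p', q = p' + 1 := ⟨q-1, by omega⟩
    have dF := tl_dens hF hSF
    have dG := tl_dens hG hSG
    have i10 := ih p (q+1) _ _ (tl1_sub hF) (tl0_sub hG) (tl1_shf hF hSF) (tl0_shf hG hSG) (by omega)
    have i01 := ih (p+1) q _ _ (tl0_sub hF) (tl1_sub hG) (tl0_shf hF hSF) (tl1_shf hG hSG) (by omega)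
    obtain ⟨r, hr⟩ : ∃ r, N = p + q + 1 + r := ⟨N - (p+q+1), by omega⟩
    have i00 : Dc (tl0 N F) (tl0 N G) * (r ! ) * N ! ≤
        r * ((tl0 N F).card * (tl0 N G).card * (N-(p+1))! * (N-(q+1))!) := by
      rcases Nat.eq_zero_or_pos r with h0 | h0
      · have : Dc (tl0 N F) (tl0 N G) = 0 := by
          unfold Dc
          rw [Finset.card_eq_zero, filter_eq_empty_iff]
          rintro ⟨A, B⟩ hz hd
          rw [mem_product] at hz
          have hA := mem_powersetCard.1 (tl0_sub hF hz.1)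
          have hB := mem_powersetCard.1 (tl0_sub hG hz.2)
          have h1 : (A ∪ B).card ≤ N := by
            have := card_le_card (union_subset hA.1 hB.1)
            simpa using this
          simp only at hd
          rw [card_union_of_disjoint hd, hA.2, hB.2] at h1
          omega
        rw [this]; simp
      · have := ih (p+1) (q+1) _ _ (tl0_sub hF) (tl0_sub hG) (tl0_shf hF hSF) (tl0_shf hG hSG) (by omega)
        have e : N - (p+1) - (q+1) = r - 1 := by omega
        rw [e] at this
        have h2 : r ! = r * (r-1)! := (Nat.mul_factorial_pred (by omega)).symm
        rw [h2]
        calc _ = r * (Dc (tl0 N F) (tl0 N G) * (r-1)! * N !) := by ring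
          _ ≤ _ := Nat.mul_le_mul_left _ this
    have hsp := Dc_split N F G
    have cF := tl_card N F
    have cG := tl_card N G
    set f0 := (tl0 N F).card
    set f1 := (tl1 N F).card
    set g0 := (tl0 N G).card
    set g1 := (tl1 N G).card
    set D00 := Dc (tl0 N F) (tl0 N G)
    set D10 := Dc (tl1 N F) (tl0 N G)
    set D01 := Dc (tl0 N F) (tl1 N G)
    have e1 : N - p - (q+1) = r := by omega
    have e2 : N - (p+1) - q = r := by omega
    have e3 : N + 1 - (p+1) - (q+1) = r := by omega
    have e4 : N + 1 - (p+1) = q + 1 + r := by omega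
    have e5 : N + 1 - (q+1) = p + 1 + r := by omega
    have e6 : N - p = q + 1 + r := by omega
    have e7 : N - q = p + 1 + r := by omega
    have e8 : N - (p+1) = q + r := by omega
    have e9 : N - (q+1) = p + r := by omega
    have x1 : (q+1+r)! = (q+r+1) * (q+r)! := by
      rw [show q+1+r = (q+r)+1 by ring, Nat.factorial_succ]
    have x2 : (p+1+r)! = (p+r+1) * (p+r)! := by
      rw [show p+1+r = (p+r)+1 by ring, Nat.factorial_succ]
    rw [e1, e6, e9, x1] at i10
    rw [e2, e7, e8, x2] at i01
    rw [e8, e9] at i00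
    rw [e3, e4, e5, x1, x2, cF, cG, Nat.factorial_succ]
    rw [e6] at dF
    rw [e7] at dG
    calc Dc F G * r ! * ((N+1) * N !) ≤ (D00 + D10 + D01) * r ! * ((N+1) * N !) := by gcongr
      _ = (N+1) * (D00 * r ! * N ! + D10 * r ! * N ! + D01 * r ! * N !) := by ring
      _ ≤ (N+1) * (r * (f0 * g0 * (q+r)! * (p+r)!) + f1 * g0 * ((q+r+1) * (q+r)!) * (p+r)! +
          f0 * g1 * (q+r)! * ((p+r+1) * (p+r)!)) := by gcongr
      _ ≤ _ := by
        rw [hr]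
        exact Dc_alg _ _ _ _ p q r _ _ dF dG

def bcol {N : ℕ} (A B : Finset (Fin N)) (x : Fin N) : Bool × Bool := (decide (x ∈ A), decide (x ∈ B))

lemma bcol_card {N : ℕ} {A B : Finset (Fin N)} (h : Disjoint A B) (c : Bool × Bool) :
    Fintype.card {x // bcol A B x = c} =
      match c with
      | (true, true) => 0
      | (true, false) => A.card
      | (false, true) => B.card
      | (false, false) => N - A.card - B.card := by
  rw [Fintype.card_subtype]
  rw [disjoint_left] at h
  rcases c with ⟨_ | _, _ | _⟩ <;> simp only [bcol, Prod.mk.injEq, decide_eq_true_eq, decide_eq_false_iff_not]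
  · have : univ.filter (fun x => x ∉ A ∧ x ∉ B) = univ \ (A ∪ B) := by ext x; simp
    rw [this, card_sdiff_of_subset (subset_univ _), card_union_of_disjoint (disjoint_left.2 h)]
    simp; omega
  · congr 1; ext x; simp; intro h1 h2; exact h h2 h1
  · congr 1; ext x; simp; intro h1; exact h h1
  · rw [card_eq_zero, filter_eq_empty_iff]; rintro x _ ⟨h1, h2⟩; exact h h1 h2

open Nat in
lemma pair_count {N : ℕ} {I J A B : Finset (Fin N)} (hIJ : Disjoint I J) (hAB : Disjoint A B)
    (h1 : I.card = A.card) (h2 : J.card = B.card) :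
    (univ.filter (fun σ : Equiv.Perm (Fin N) => I.map σ.toEmbedding = A ∧ J.map σ.toEmbedding = B)).card
      = I.card ! * J.card ! * (N - I.card - J.card)! := by
  classical
  have hfib : ∀ c, Fintype.card {x // bcol I J x = c} = Fintype.card {x // bcol A B x = c} := by
    intro c; rw [bcol_card hIJ, bcol_card hAB, h1, h2]
  set π : Equiv.Perm (Fin N) := Equiv.ofFiberEquiv (fun c => Fintype.equivOfCardEq (hfib c)) with hπ
  have hπc : ∀ x, bcol A B (π x) = bcol I J x := fun x => Equiv.ofFiberEquiv_map _ x
  have key : ∀ σ : Equiv.Perm (Fin N), (I.map σ.toEmbedding = A ∧ J.map σ.toEmbedding = B) ↔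
      bcol A B ∘ σ = bcol I J := by
    intro σ
    have gen : ∀ I A : Finset (Fin N), I.map σ.toEmbedding = A ↔ ∀ x, σ x ∈ A ↔ x ∈ I := by
      intro I A
      constructor
      · rintro rfl x; simp
      · intro h; ext y
        have := h (σ.symm y)
        simp only [Equiv.apply_symm_apply] at this
        rw [this, mem_map_equiv]
    rw [gen, gen, funext_iff]
    simp only [bcol, Function.comp, Prod.mk.injEq, decide_eq_decide, forall_and]
  have e1 : (univ.filter (fun σ : Equiv.Perm (Fin N) => I.map σ.toEmbedding = A ∧ J.map σ.toEmbedding = B)).card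
      = (univ.filter (fun σ : Equiv.Perm (Fin N) => bcol I J ∘ σ = bcol I J)).card := by
    apply card_bij (fun σ _ => π⁻¹ * σ)
    · intro σ hσ
      rw [mem_filter, key] at hσ
      rw [mem_filter]
      refine ⟨mem_univ _, ?_⟩
      funext x
      have := congrFun hσ.2 x
      simp only [Function.comp] at this ⊢
      rw [← this, ← hπc]
      simp
    · intro σ _ τ _ h; exact mul_left_cancel h
    · intro τ hτ
      rw [mem_filter] at hτ
      refine ⟨π * τ, ?_, by simp⟩
      rw [mem_filter, key]
      refine ⟨mem_univ _, ?_⟩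
      funext x
      have := congrFun hτ.2 x
      simp only [Function.comp, Equiv.Perm.mul_apply] at this ⊢
      rw [hπc, this]
  rw [e1, ← Fintype.card_subtype, DomMulAct.stabilizer_card]
  simp only [bcol_card hIJ]
  rw [Fintype.prod_prod_type]
  simp
  ring

def phi {N : ℕ} (σ : Equiv.Perm (Fin N)) (I : Finset (Fin N)) : Finset ℕ :=
  (I.map σ.toEmbedding).map Fin.valEmbedding

lemma phi_card {N : ℕ} (σ : Equiv.Perm (Fin N)) (I : Finset (Fin N)) : (phi σ I).card = I.card := by
  simp [phi]

lemma phi_sub {N : ℕ} (σ : Equiv.Perm (Fin N)) (I : Finset (Fin N)) : phi σ I ⊆ range N := by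
  intro x hx
  simp only [phi, mem_map] at hx
  obtain ⟨y, _, rfl⟩ := hx
  simp

lemma phi_disj {N : ℕ} (σ : Equiv.Perm (Fin N)) {I J : Finset (Fin N)} :
    Disjoint (phi σ I) (phi σ J) ↔ Disjoint I J := by
  simp [phi]

lemma phi_mono {N : ℕ} (σ : Equiv.Perm (Fin N)) {I J : Finset (Fin N)} (h : I ⊆ J) :
    phi σ I ⊆ phi σ J := by
  unfold phi; exact map_subset_map.2 (map_subset_map.2 h)

lemma exists_finA {N : ℕ} {A : Finset ℕ} (h : A ⊆ range N) :
    ∃ A' : Finset (Fin N), A'.map Fin.valEmbedding = A := by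
  refine ⟨univ.filter (fun x => (x : ℕ) ∈ A), ?_⟩
  ext x
  simp only [mem_map, mem_filter, mem_univ, true_and, Fin.valEmbedding_apply]
  constructor
  · rintro ⟨y, hy, rfl⟩; exact hy
  · intro hx; exact ⟨⟨x, mem_range.1 (h hx)⟩, hx, rfl⟩

open Nat in
lemma pair_prob {N : ℕ} {I J : Finset (Fin N)} (hIJ : Disjoint I J) {F G : Finset (Finset ℕ)}
    (hF : F ⊆ (range N).powersetCard I.card) (hG : G ⊆ (range N).powersetCard J.card) :
    (univ.filter (fun σ : Equiv.Perm (Fin N) => phi σ I ∈ F ∧ phi σ J ∈ G)).card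
      = Dc F G * (I.card ! * J.card ! * (N - I.card - J.card)!) := by
  classical
  unfold Dc
  rw [card_eq_sum_card_fiberwise (f := fun σ => (phi σ I, phi σ J))
    (t := (F ×ˢ G).filter (fun z => Disjoint z.1 z.2))]
  · rw [← smul_eq_mul, ← sum_const]
    apply sum_congr rfl
    rintro ⟨A, B⟩ hz
    rw [mem_filter, mem_product] at hz
    obtain ⟨⟨hA, hB⟩, hd⟩ := hz
    simp only at hA hB hd
    have hA' := mem_powersetCard.1 (hF hA)
    have hB' := mem_powersetCard.1 (hG hB)
    obtain ⟨A', rfl⟩ := exists_finA hA'.1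
    obtain ⟨B', rfl⟩ := exists_finA hB'.1
    rw [← pair_count hIJ (by simpa using hd) (by simpa using hA'.2.symm) (by simpa using hB'.2.symm)]
    congr 1
    ext σ
    simp only [mem_filter, mem_univ, true_and, Prod.mk.injEq, phi, map_inj]
    constructor
    · rintro ⟨_, h⟩; exact h
    · rintro ⟨h1, h2⟩
      refine ⟨mem_filter.2 ⟨mem_univ _, ?_⟩, h1, h2⟩
      rw [h1, h2]; exact ⟨hA, hB⟩
  · intro σ hσ
    simp only [coe_filter, mem_univ, true_and, Set.mem_ofPred_eq, mem_product] at hσ ⊢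
    exact ⟨hσ, (phi_disj σ).2 hIJ⟩

open Nat in
lemma single_prob {N : ℕ} (I : Finset (Fin N)) {F : Finset (Finset ℕ)}
    (hF : F ⊆ (range N).powersetCard I.card) :
    (univ.filter (fun σ : Equiv.Perm (Fin N) => phi σ I ∈ F)).card
      = F.card * (I.card ! * (N - I.card)!) := by
  have := pair_prob (I := I) (J := ∅) (disjoint_empty_right _) (G := {∅}) hF (by simp)
  have e : Dc F {∅} = F.card := by
    unfold Dc
    rw [filter_true_of_mem]
    · simp
    · rintro ⟨A, B⟩ hz
      simp only [mem_product, mem_singleton] at hz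
      rw [hz.2]; exact disjoint_empty_right _
  rw [e] at this
  have e2 : (univ.filter (fun σ : Equiv.Perm (Fin N) => phi σ I ∈ F)).card =
      (univ.filter (fun σ : Equiv.Perm (Fin N) => phi σ I ∈ F ∧ phi σ ∅ ∈ ({∅} : Finset (Finset ℕ)))).card := by
    congr 1
    ext σ
    have h0 : phi σ ∅ = ∅ := by simp [phi]
    rw [mem_filter, mem_filter, h0]
    simp
  rw [e2, this]
  simp

open Nat in
lemma pair_bound {N : ℕ} {I J : Finset (Fin N)} (hIJ : Disjoint I J) {F G : Finset (Finset ℕ)}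
    (hF : F ⊆ (range N).powersetCard I.card) (hG : G ⊆ (range N).powersetCard J.card)
    (hSF : Shf F) (hSG : Shf G) :
    (univ.filter (fun σ : Equiv.Perm (Fin N) => phi σ I ∈ F ∧ phi σ J ∈ G)).card * N ! ≤
    (univ.filter (fun σ : Equiv.Perm (Fin N) => phi σ I ∈ F)).card *
    (univ.filter (fun σ : Equiv.Perm (Fin N) => phi σ J ∈ G)).card := by
  rw [pair_prob hIJ hF hG, single_prob I hF, single_prob J hG]
  have hc : I.card + J.card ≤ N := by
    rw [← card_union_of_disjoint hIJ]
    simpa using card_le_univ (I ∪ J)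
  have := Dc_bound N _ _ F G hF hG hSF hSG hc
  calc _ = (I.card ! * J.card !) * (Dc F G * (N - I.card - J.card)! * N !) := by ring
    _ ≤ (I.card ! * J.card !) * (F.card * G.card * (N - I.card)! * (N - J.card)!) :=
      Nat.mul_le_mul_left _ this
    _ = _ := by ring

def Zc {N : ℕ} {ι : Type*} [Fintype ι] (I : ι → Finset (Fin N)) (G : Finset (Finset ℕ))
    (σ : Equiv.Perm (Fin N)) : ℕ := (univ.filter (fun j => phi σ (I j) ∈ G)).card

open Nat in
lemma Z_sum {N l : ℕ} {ι : Type*} [Fintype ι] (I : ι → Finset (Fin N)) (hI : ∀ j, (I j).card = l)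
    {G : Finset (Finset ℕ)} (hl : l ≤ N) (hG : G ⊆ (range N).powersetCard l) :
    ∑ σ, (Zc I G σ : ℝ) = N ! * (Fintype.card ι * ((G.card : ℝ) / (N.choose l))) := by
  have h1 : ∑ σ, Zc I G σ = Fintype.card ι * (G.card * (l ! * (N - l)!)) := by
    unfold Zc
    simp_rw [card_filter]
    rw [sum_comm]
    have : ∀ j : ι, ∑ σ : Equiv.Perm (Fin N), (if phi σ (I j) ∈ G then 1 else 0) =
        G.card * (l ! * (N - l)!) := by
      intro j
      rw [← card_filter, single_prob _ (by rw [hI]; exact hG), hI]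
    rw [sum_congr rfl (fun j _ => this j)]
    simp
  have h2 : (N.choose l : ℝ) * (l ! * (N-l)!) = N ! := by
    have := Nat.choose_mul_factorial_mul_factorial hl
    exact_mod_cast (by rw [← this]; ring)
  have h3 : (0:ℝ) < N.choose l := by exact_mod_cast Nat.choose_pos hl
  rw [← h2]
  field_simp
  exact_mod_cast (by rw [h1]; ring)

open Nat in
lemma Z_sq {N l : ℕ} {ι : Type*} [Fintype ι] (I : ι → Finset (Fin N)) (hI : ∀ j, (I j).card = l)
    (hd : ∀ i j, i ≠ j → Disjoint (I i) (I j))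
    {G : Finset (Finset ℕ)} (hl : l ≤ N) (hG : G ⊆ (range N).powersetCard l) (hS : Shf G) (μ : ℝ)
    (hμ : μ = Fintype.card ι * ((G.card : ℝ) / (N.choose l))) :
    ∑ σ, (Zc I G σ : ℝ)^2 ≤ N ! * (μ + μ^2) := by
  classical
  set c := G.card * (l ! * (N - l)!) with hc
  have h2 : (N.choose l : ℝ) * (l ! * (N-l)!) = N ! := by
    have := Nat.choose_mul_factorial_mul_factorial hl
    exact_mod_cast (by rw [← this]; ring)
  have h3 : (0:ℝ) < N.choose l := by exact_mod_cast Nat.choose_pos hl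
  have hN : (0:ℝ) < N ! := by exact_mod_cast Nat.factorial_pos N
  have hcr : (c:ℝ) = N ! * ((G.card : ℝ) / (N.choose l)) := by
    rw [← h2, hc]; push_cast; field_simp
  have hs : ∀ j, (univ.filter (fun σ : Equiv.Perm (Fin N) => phi σ (I j) ∈ G)).card = c := by
    intro j; rw [single_prob _ (by rw [hI]; exact hG), hI]
  have e : ∀ σ, (Zc I G σ : ℝ)^2 =
      ∑ i, ∑ j, (if phi σ (I i) ∈ G ∧ phi σ (I j) ∈ G then (1:ℝ) else 0) := by
    intro σ
    unfold Zc
    rw [card_filter]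
    push_cast
    rw [sq, sum_mul_sum]
    apply sum_congr rfl; intro i _
    apply sum_congr rfl; intro j _
    by_cases h1 : phi σ (I i) ∈ G <;> by_cases h2 : phi σ (I j) ∈ G <;> simp [h1, h2]
  simp_rw [e]
  rw [sum_comm]
  have hb : ∀ i j, ∑ σ : Equiv.Perm (Fin N), (if phi σ (I i) ∈ G ∧ phi σ (I j) ∈ G then (1:ℝ) else 0) ≤
      (if i = j then (c:ℝ) else 0) + (c:ℝ)^2 / N ! := by
    intro i j
    rw [← natCast_card_filter]
    by_cases hij : i = j
    · subst hij
      simp only [and_self, if_true]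
      rw [hs]
      have : (0:ℝ) ≤ (c:ℝ)^2 / N ! := by positivity
      linarith
    · simp only [hij, if_false, zero_add]
      rw [le_div_iff₀ hN]
      have := pair_bound (hd i j hij) (F := G) (G := G) (by rw [hI]; exact hG) (by rw [hI]; exact hG) hS hS
      rw [hs, hs] at this
      rw [sq]
      exact_mod_cast this
  calc _ ≤ ∑ i : ι, ∑ j : ι, ((if i = j then (c:ℝ) else 0) + (c:ℝ)^2 / N !) := by
        apply sum_le_sum; intro i _
        rw [sum_comm]
        apply sum_le_sum; intro j _
        exact hb i j
    _ = N ! * (μ + μ^2) := by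
        simp only [sum_add_distrib, sum_ite_eq, mem_univ, if_true, sum_const, Finset.card_univ,
          nsmul_eq_mul]
        rw [hμ, hcr]
        field_simp
        try ring

/-- Chebyshev. -/
lemma Z_cheb {N l : ℕ} {ι : Type*} [Fintype ι] (I : ι → Finset (Fin N)) (hI : ∀ j, (I j).card = l)
    (hd : ∀ i j, i ≠ j → Disjoint (I i) (I j))
    {G : Finset (Finset ℕ)} (hl : l ≤ N) (hG : G ⊆ (range N).powersetCard l) (hS : Shf G) (μ : ℝ)
    (hμ : μ = Fintype.card ι * ((G.card : ℝ) / (N.choose l))) (lam : ℝ) (hlam : 0 ≤ lam)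
    (S : Finset (Equiv.Perm (Fin N))) (hSl : ∀ σ ∈ S, lam ≤ |(Zc I G σ : ℝ) - μ|) :
    S.card * lam^2 ≤ N.factorial * μ := by
  have h1 := Z_sum I hI hl hG
  have h2 := Z_sq I hI hd hl hG hS μ hμ
  rw [← hμ] at h1
  have h3 : ∑ σ, ((Zc I G σ : ℝ) - μ)^2 ≤ N.factorial * μ := by
    have : ∑ σ, ((Zc I G σ : ℝ) - μ)^2 = ∑ σ, (Zc I G σ : ℝ)^2 - 2 * μ * ∑ σ, (Zc I G σ : ℝ)
        + N.factorial * μ^2 := by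
      have : ∀ σ, ((Zc I G σ : ℝ) - μ)^2 = (Zc I G σ : ℝ)^2 - 2 * μ * (Zc I G σ : ℝ) + μ^2 := by
        intro σ; ring
      simp_rw [this]
      rw [sum_add_distrib, sum_sub_distrib, ← mul_sum]
      simp [Fintype.card_perm]
    rw [this, h1]
    nlinarith
  refine le_trans ?_ h3
  calc (S.card : ℝ) * lam^2 = ∑ σ ∈ S, lam^2 := by simp
    _ ≤ ∑ σ ∈ S, ((Zc I G σ : ℝ) - μ)^2 := by
      apply sum_le_sum
      intro σ hσ
      rw [← sq_abs ((Zc I G σ : ℝ) - μ)]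
      exact pow_le_pow_left₀ hlam (hSl σ hσ) 2
    _ ≤ _ := sum_le_sum_of_subset_of_nonneg (subset_univ _) (fun _ _ _ => sq_nonneg _)

def tau (s : ℕ) (A : Finset ℕ) : Finset ℕ := A.map (addRightEmbedding (s+1))

lemma mem_tau {s x : ℕ} {A : Finset ℕ} : x ∈ tau s A ↔ ∃ y ∈ A, y + (s+1) = x := by
  simp [tau]

lemma tau_gt {s x : ℕ} {A : Finset ℕ} (h : x ∈ tau s A) : s < x := by
  obtain ⟨y, _, rfl⟩ := mem_tau.1 h; omega

lemma add_mem_tau {s x : ℕ} {A : Finset ℕ} : x + (s+1) ∈ tau s A ↔ x ∈ A := by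
  simp [tau]

lemma tau_card (s : ℕ) (A : Finset ℕ) : (tau s A).card = A.card := by simp [tau]

lemma tau_disj {s : ℕ} {A B : Finset ℕ} : Disjoint (tau s A) (tau s B) ↔ Disjoint A B := by
  simp [tau]

lemma disj_T_tau {s : ℕ} {T A : Finset ℕ} (hT : T ⊆ range (s+1)) : Disjoint T (tau s A) := by
  rw [disjoint_left]
  intro x h1 h2
  have := mem_range.1 (hT h1)
  have := tau_gt h2
  omega

def lk (F : Finset (Finset ℕ)) (s N : ℕ) (T : Finset ℕ) (c : ℕ) : Finset (Finset ℕ) :=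
  ((range N).powersetCard c).filter (fun A => T ∪ tau s A ∈ F)

lemma mem_lk {F : Finset (Finset ℕ)} {s N : ℕ} {T : Finset ℕ} {c : ℕ} {A : Finset ℕ} :
    A ∈ lk F s N T c ↔ (A ⊆ range N ∧ A.card = c) ∧ T ∪ tau s A ∈ F := by
  simp [lk, mem_powersetCard]

lemma lk_sub (F : Finset (Finset ℕ)) (s N : ℕ) (T : Finset ℕ) (c : ℕ) :
    lk F s N T c ⊆ (range N).powersetCard c := filter_subset _ _

lemma lk_shf {F : Finset (Finset ℕ)} (hS : Shf F) {s N : ℕ} {T : Finset ℕ} (hT : T ⊆ range (s+1)) {c : ℕ} :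
    Shf (lk F s N T c) := by
  intro A hA i j hij hj hi
  rw [mem_lk] at hA ⊢
  obtain ⟨⟨h1, h2⟩, h3⟩ := hA
  have hjN := mem_range.1 (h1 hj)
  have hT' : ∀ x ∈ T, x < s+1 := fun x hx => mem_range.1 (hT hx)
  refine ⟨⟨?_, ?_⟩, ?_⟩
  · intro x hx
    rw [mem_insert, mem_erase] at hx
    rcases hx with rfl | hx
    · exact mem_range.2 (by omega)
    · exact h1 hx.2
  · rw [card_insert_of_notMem (by simp [hi]), card_erase_of_mem hj]
    have := card_pos.2 ⟨j, hj⟩; omega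
  · have := hS _ h3 (i+(s+1)) (j+(s+1)) (by omega) (mem_union_right _ (add_mem_tau.2 hj)) (by
      rw [mem_union, add_mem_tau]
      rintro (h | h)
      · have := hT' _ h; omega
      · exact hi h)
    convert this using 1
    ext x
    simp only [mem_union, mem_insert, mem_erase, mem_tau]
    constructor
    · rintro (h | ⟨y, rfl | h, rfl⟩)
      · right; refine ⟨?_, Or.inl h⟩
        have := hT' _ h; omega
      · left; rfl
      · right; exact ⟨by omega, Or.inr ⟨y, h.2, rfl⟩⟩
    · rintro (rfl | ⟨h, h' | ⟨y, hy, rfl⟩⟩)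
      · right; exact ⟨i, Or.inl rfl, rfl⟩
      · left; exact h'
      · right; exact ⟨y, Or.inr ⟨by omega, hy⟩, rfl⟩

lemma lk_dom {F : Finset (Finset ℕ)} (hS : Shf F) {s N : ℕ} {T T' : Finset ℕ} (hT : T ⊆ range (s+1))
    (hT' : T' ⊆ range (s+1)) (hc : T'.card = T.card)
    (hd : ∀ x, (T.filter (· < x)).card ≤ (T'.filter (· < x)).card) {c : ℕ} :
    lk F s N T c ⊆ lk F s N T' c := by
  intro A hA
  rw [mem_lk] at hA ⊢
  refine ⟨hA.1, dom_mem hS _ _ rfl hA.2 ?_ ?_⟩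
  · rw [card_union_of_disjoint (disj_T_tau hT), card_union_of_disjoint (disj_T_tau hT'), hc]
  · intro x
    rw [filter_union, filter_union,
      card_union_of_disjoint (disjoint_filter_filter (disj_T_tau hT)),
      card_union_of_disjoint (disjoint_filter_filter (disj_T_tau hT'))]
    have := hd x
    omega

lemma lk_shadow {F : Finset (Finset ℕ)} (hS : Shf F) {s N : ℕ} {T : Finset ℕ} (hT : T ⊆ range (s+1))
    {i : ℕ} (hi : i < s+1) (hiT : i ∉ T) {c : ℕ} :
    (lk F s N T (c+1)).shadow ⊆ lk F s N (insert i T) c := by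
  intro B hB
  rw [mem_shadow_iff] at hB
  obtain ⟨A, hA, x, hx, rfl⟩ := hB
  rw [mem_lk] at hA ⊢
  obtain ⟨⟨h1, h2⟩, h3⟩ := hA
  refine ⟨⟨(erase_subset _ _).trans h1, by rw [card_erase_of_mem hx]; omega⟩, ?_⟩
  have := hS _ h3 i (x+(s+1)) (by omega) (mem_union_right _ (add_mem_tau.2 hx)) (by
    rw [mem_union]
    rintro (h | h)
    · exact hiT h
    · have := tau_gt h; omega)
  convert this using 1
  have hT' : ∀ x ∈ T, x < s+1 := fun x hx => mem_range.1 (hT hx)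
  ext z
  simp only [mem_union, mem_insert, mem_erase, mem_tau]
  constructor
  · rintro ((h | h) | ⟨y, h, rfl⟩)
    · left; exact h
    · right; have := hT' _ h; exact ⟨by omega, Or.inl h⟩
    · right; exact ⟨by omega, Or.inr ⟨y, h.2, rfl⟩⟩
  · rintro (h | ⟨h, h' | ⟨y, hy, rfl⟩⟩)
    · exact Or.inl (Or.inl h)
    · exact Or.inl (Or.inr h')
    · exact Or.inr ⟨y, ⟨by omega, hy⟩, rfl⟩

lemma nm_links {F : Finset (Finset ℕ)} {s : ℕ} (hF : NM F s) {ι : Type*} [Fintype ι]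
    (hι : Fintype.card ι = s+1) (T A : ι → Finset ℕ) (hT : ∀ i, T i ⊆ range (s+1))
    (hTd : ∀ i j, i ≠ j → Disjoint (T i) (T j)) (hAd : ∀ i j, i ≠ j → Disjoint (A i) (A j))
    (hm : ∀ i, T i ∪ tau s (A i) ∈ F) : False := by
  have e : ι ≃ Fin (s+1) := Fintype.equivFinOfCardEq hι
  refine hF (fun i => T (e.symm i) ∪ tau s (A (e.symm i))) (fun i => hm _) ?_
  intro i j hij
  have h : e.symm i ≠ e.symm j := fun h => hij (e.symm.injective h)
  rw [disjoint_union_left, disjoint_union_right, disjoint_union_right]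
  exact ⟨⟨hTd _ _ h, disj_T_tau (hT _)⟩, (disj_T_tau (hT _)).symm, tau_disj.2 (hAd _ _ h)⟩

lemma full_le {F : Finset (Finset ℕ)} {N k m : ℕ} (hk : 1 ≤ k) (hF : F ⊆ (range N).powersetCard k)
    (h : Full F k m) : k * m ≤ N := by
  rcases Nat.eq_zero_or_pos m with rfl | hm
  · simp
  have hinj : Function.Injective (fun i => (i+1)*m - 1) := by
    intro a b hab
    simp only at hab
    have h1 : 1 ≤ (a+1)*m := Nat.mul_pos (by omega) hm
    have h2 : 1 ≤ (b+1)*m := Nat.mul_pos (by omega) hm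
    have h3 : (a+1)*m = (b+1)*m := by omega
    have := Nat.eq_of_mul_eq_mul_right hm h3
    omega
  have h1 := h ((range k).image (fun i => (i+1)*m - 1)) (by
    rw [card_image_of_injective _ hinj, card_range]) (by
    intro i h1 h2
    calc i = ((range i).image (fun i => (i+1)*m - 1)).card := by
          rw [card_image_of_injective _ hinj, card_range]
      _ ≤ _ := by
        apply card_le_card
        intro x hx
        rw [mem_image] at hx
        obtain ⟨c, hc, rfl⟩ := hx
        rw [mem_range] at hc
        rw [mem_filter]
        refine ⟨mem_image.2 ⟨c, mem_range.2 (by omega), rfl⟩, ?_⟩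
        have h3 : (c+1)*m ≤ i * m := Nat.mul_le_mul_right _ hc
        have h4 : 1 ≤ (c+1)*m := Nat.mul_pos (by omega) hm
        omega)
  have h2 := (mem_powersetCard.1 (hF h1)).1
  have h3 := mem_range.1 (h2 (mem_image.2 ⟨k-1, mem_range.2 (by omega), rfl⟩))
  rw [show k - 1 + 1 = k by omega] at h3
  omega

lemma not_full_lk {F : Finset (Finset ℕ)} {s N : ℕ} (hF : NM F s) (T : Fin (s+1) → Finset ℕ)
    (hT : ∀ i, T i ⊆ range (s+1)) (hTd : ∀ i j, i ≠ j → Disjoint (T i) (T j)) {c : ℕ} (hc : 1 ≤ c)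
    {G : Finset (Finset ℕ)} (hG : ∀ i, G ⊆ lk F s N (T i) c) : ¬ Full G c (s+1) := by
  intro hfull
  have hle := full_le hc ((hG 0).trans (lk_sub _ _ _ _ _)) hfull
  obtain ⟨f, hf1, -, hf3⟩ := full_matching (a := s+1) hc hfull (range N) (by
    intro i h1 h2
    have h3 : i * (s+1) ≤ c * (s+1) := Nat.mul_le_mul_right _ h2
    have : (range N).filter (· < i * (s+1)) = range (i*(s+1)) := by
      ext x; simp; intro h; omega
    rw [this, card_range])
  exact nm_links hF (by simp) T f hT hTd hf3 (fun i => (mem_lk.1 (hG i (hf1 i))).2)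

/-- Hall consequence. -/
lemma hall_ineq {ι : Type*} [Fintype ι] [DecidableEq ι] (s : ℕ) (J : ℕ → Finset ι)
    (hJ : ∀ i j, i ≤ j → j ≤ s → J j ⊆ J i)
    (hno : ∀ f : Fin (s+1) → ι, Function.Injective f → ¬ ∀ i : Fin (s+1), f i ∈ J i) :
    ∃ v : ℕ, v ≤ s ∧ (J s).card ≤ v ∧
      (v : ℝ) * (Fintype.card ι - v) ≤ ∑ j ∈ range s, ((Fintype.card ι : ℝ) - (J j).card) := by
  have h1 : ¬ ∀ X : Finset (Fin (s+1)), X.card ≤ (X.biUnion (fun i => J i)).card := by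
    intro h
    obtain ⟨f, hf, hf'⟩ := (Finset.all_card_le_biUnion_card_iff_exists_injective (fun i : Fin (s+1) => J i)).1 h
    exact hno f hf hf'
  push Not at h1
  obtain ⟨X, hX⟩ := h1
  have hne : X.Nonempty := by
    rw [nonempty_iff_ne_empty]; rintro rfl; simp at hX
  set i0 := X.min' hne with hi0
  have hmem : i0 ∈ X := X.min'_mem hne
  have h2 : (J i0).card ≤ (X.biUnion (fun i => J i)).card := by
    apply card_le_card
    exact subset_biUnion_of_mem (fun i : Fin (s+1) => J i) hmem
  have h3 : X.card ≤ s + 1 - i0 := by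
    have : X ⊆ Ici i0 := by
      intro x hx; rw [mem_Ici]; exact X.min'_le x hx
    have := card_le_card this
    rwa [Fin.card_Ici] at this
  have hi0s : (i0 : ℕ) ≤ s := by have := i0.2; omega
  have h4 : (J i0).card ≤ s - i0 := by omega
  refine ⟨s - i0, by omega, (card_le_card (hJ i0 s hi0s le_rfl)).trans h4, ?_⟩
  have hnn : ∀ j, (0:ℝ) ≤ (Fintype.card ι : ℝ) - (J j).card := by
    intro j
    rw [sub_nonneg]; exact_mod_cast card_le_univ _
  calc ((s - i0 : ℕ) : ℝ) * (Fintype.card ι - ((s - i0 : ℕ) : ℝ))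
      = ∑ j ∈ Ico (i0 : ℕ) s, ((Fintype.card ι : ℝ) - ((s - i0 : ℕ) : ℝ)) := by
        rw [sum_const, Nat.card_Ico, nsmul_eq_mul]
    _ ≤ ∑ j ∈ Ico (i0 : ℕ) s, ((Fintype.card ι : ℝ) - (J j).card) := by
        apply sum_le_sum
        intro j hj
        rw [mem_Ico] at hj
        have := (card_le_card (hJ i0 j hj.1 hj.2.le)).trans h4
        have : ((J j).card : ℝ) ≤ ((s - i0 : ℕ) : ℝ) := by exact_mod_cast this
        linarith
    _ ≤ _ := by
        apply sum_le_sum_of_subset_of_nonneg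
        · intro j; simp only [mem_Ico, mem_range]; omega
        · intro j _ _; exact hnn j

lemma quad_ineq (t s v d : ℝ) (h1 : d ≤ v) (h2 : v ≤ s) (h3 : 0.955 * t^2 / 4 ≤ s * (t - s))
    (h0 : 0 ≤ d) (ht : d ≤ t): 0.955 * (d * (t - d)) ≤ v * (t - v) := by
  by_cases h : v ≤ t - d
  · nlinarith [mul_nonneg (sub_nonneg.2 h1) (sub_nonneg.2 h), mul_nonneg h0 (sub_nonneg.2 ht)]
  · push Not at h
    nlinarith [sq_nonneg (t - 2*d), mul_nonneg (sub_nonneg.2 h2) (show 0 ≤ s + v - t by linarith)]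

def blk (N w c j : ℕ) : Finset (Fin N) := univ.filter (fun x => j * w ≤ (x:ℕ) ∧ (x:ℕ) < j * w + c)

lemma blk_card {N w c j : ℕ} (h : j * w + c ≤ N) : (blk N w c j).card = c := by
  have : (blk N w c j).map Fin.valEmbedding = Ico (j*w) (j*w+c) := by
    ext x
    simp only [blk, mem_map, mem_filter, mem_univ, true_and, Fin.valEmbedding_apply, mem_Ico]
    constructor
    · rintro ⟨y, hy, rfl⟩; exact hy
    · intro hx; exact ⟨⟨x, by omega⟩, hx, rfl⟩
  rw [← card_map Fin.valEmbedding, this, Nat.card_Ico]; omega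

lemma blk_lt {w a b x c : ℕ} (hc : c ≤ w) (h : a < b) (h1 : x < a * w + c) (h2 : b * w ≤ x) : False := by
  have h3 : (a+1) * w ≤ b * w := Nat.mul_le_mul_right _ h
  rw [add_mul, one_mul] at h3
  omega

lemma blk_disj {N w c c' i j : ℕ} (hc : c ≤ w) (hc' : c' ≤ w) (hij : i ≠ j) :
    Disjoint (blk N w c i) (blk N w c' j) := by
  rw [disjoint_left]
  intro x h1 h2
  simp only [blk, mem_filter, mem_univ, true_and] at h1 h2
  rcases lt_or_gt_of_ne hij with h | h
  · exact blk_lt hc h h1.2 h2.1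
  · exact blk_lt hc' h h2.2 h1.1

lemma blk_bound {b l N : ℕ} (h : b * l ≤ N) (j : Fin b) {c : ℕ} (hc : c ≤ l) : (j:ℕ) * l + c ≤ N := by
  have : ((j:ℕ) + 1) * l ≤ b * l := Nat.mul_le_mul_right _ j.2
  rw [add_mul, one_mul] at this
  omega

lemma lk_nest {F : Finset (Finset ℕ)} (hS : Shf F) {s N c : ℕ} {i j : ℕ} (hij : i ≤ j) (hj : j ≤ s) :
    lk F s N {j} c ⊆ lk F s N {i} c := by
  apply lk_dom hS
  · simp; omega
  · simp; omega
  · simp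
  · intro x
    rw [filter_singleton, filter_singleton]
    split_ifs with h1 h2
    · simp
    · omega
    · simp
    · simp

lemma hall_sigma {F : Finset (Finset ℕ)} (hS : Shf F) {s N l t : ℕ} (hF : NM F s) (htl : t * l ≤ N)
    (σ : Equiv.Perm (Fin N)) :
    ∃ v : ℕ, v ≤ s ∧ Zc (fun j : Fin t => blk N l l j) (lk F s N {s} l) σ ≤ v ∧
      (v : ℝ) * (t - v) ≤ ∑ i ∈ range s, ((t:ℝ) - Zc (fun j : Fin t => blk N l l j) (lk F s N {i} l) σ) := by
  have := hall_ineq (ι := Fin t) s (fun i => univ.filter (fun j : Fin t => phi σ (blk N l l j) ∈ lk F s N {i} l))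
    (by
      intro i j hij hj x
      simp only [mem_filter, mem_univ, true_and]
      intro h; exact lk_nest hS hij hj h)
    (by
      intro f hf hm
      refine nm_links hF (ι := Fin (s+1)) (by simp) (fun i => {(i:ℕ)}) (fun i => phi σ (blk N l l (f i))) ?_ ?_ ?_ ?_
      · intro i; simp [Fin.is_le]
      · intro i j hij; simp [Fin.ext_iff] at hij ⊢; omega
      · intro i j hij
        rw [phi_disj]
        apply blk_disj le_rfl le_rfl
        intro h; exact hij (hf (Fin.ext h))
      · intro i
        have := hm i
        simp only [mem_filter, mem_univ, true_and] at this
        exact (mem_lk.1 this).2)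
  simpa [Zc] using this

noncomputable def dnst (N c : ℕ) (G : Finset (Finset ℕ)) : ℝ := (G.card : ℝ) / (N.choose c)

lemma dnst_nonneg (N c : ℕ) (G : Finset (Finset ℕ)) : 0 ≤ dnst N c G := by unfold dnst; positivity

lemma dnst_le_one {N c : ℕ} {G : Finset (Finset ℕ)} (h : G ⊆ (range N).powersetCard c) : dnst N c G ≤ 1 := by
  unfold dnst
  apply div_le_one_of_le₀ _ (by positivity)
  have := card_le_card h
  rw [card_powersetCard, card_range] at this
  exact_mod_cast this

lemma mean_ineq {F : Finset (Finset ℕ)} (hS : Shf F) {s N l t : ℕ} (hF : NM F s) (htl : t * l ≤ N)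
    (ht : 1 ≤ t) (hst : s ≤ t) :
    (t:ℝ) * dnst N l (lk F s N {s} l) ≤ s ∧
    ((t:ℝ) - s) * dnst N l (lk F s N {s} l) ≤ ∑ i ∈ range s, (1 - dnst N l (lk F s N {i} l)) ∧
    (0.955 * (t:ℝ)^2 / 4 ≤ s * (t - s) → 
      0.955 * (dnst N l (lk F s N {s} l) * (t - 1 - t * dnst N l (lk F s N {s} l))) ≤
        ∑ i ∈ range s, (1 - dnst N l (lk F s N {i} l))) := by
  have hl : l ≤ N := le_trans (Nat.le_mul_of_pos_left l ht) htl
  set I : Fin t → Finset (Fin N) := fun j => blk N l l j with hI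
  have hIc : ∀ j, (I j).card = l := fun j => blk_card (blk_bound htl j le_rfl)
  have hId : ∀ i j, i ≠ j → Disjoint (I i) (I j) := fun i j hij =>
    blk_disj le_rfl le_rfl (fun h => hij (Fin.ext h))
  set p := dnst N l (lk F s N {s} l) with hp
  have hsum : ∀ i, ∑ σ, (Zc I (lk F s N {i} l) σ : ℝ) = N.factorial * (t * dnst N l (lk F s N {i} l)) := by
    intro i
    have := Z_sum I hIc hl (lk_sub F s N {i} l)
    simpa [dnst] using this
  have hsq := Z_sq I hIc hId hl (lk_sub F s N {s} l) (lk_shf hS (by simp)) (t * p) (by simp [hp, dnst])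
  have hNf : (0:ℝ) < N.factorial := by exact_mod_cast Nat.factorial_pos N
  have htr : (0:ℝ) < t := by exact_mod_cast ht
  have hstr : (s:ℝ) ≤ t := by exact_mod_cast hst
  have htot : ∑ σ : Equiv.Perm (Fin N), ∑ i ∈ range s, ((t:ℝ) - Zc I (lk F s N {i} l) σ) =
      N.factorial * (t * ∑ i ∈ range s, (1 - dnst N l (lk F s N {i} l))) := by
    rw [sum_comm, mul_sum, mul_sum]
    apply sum_congr rfl
    intro i _
    rw [sum_sub_distrib, hsum]
    simp [Fintype.card_perm]
    ring
  have hsig := fun σ => hall_sigma hS hF htl σ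
  have hcs : ∑ σ : Equiv.Perm (Fin N), (s:ℝ) = N.factorial * s := by simp [Fintype.card_perm]
  refine ⟨?_, ?_, ?_⟩
  · have h1 : ∑ σ, (Zc I (lk F s N {s} l) σ : ℝ) ≤ ∑ σ : Equiv.Perm (Fin N), (s:ℝ) := by
      apply sum_le_sum
      intro σ _
      obtain ⟨v, h1, h2, _⟩ := hsig σ
      exact_mod_cast h2.trans h1
    rw [hsum, hcs] at h1
    exact le_of_mul_le_mul_left h1 hNf
  · have h1 : ∑ σ, ((t:ℝ) - s) * (Zc I (lk F s N {s} l) σ : ℝ) ≤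
        ∑ σ : Equiv.Perm (Fin N), ∑ i ∈ range s, ((t:ℝ) - Zc I (lk F s N {i} l) σ) := by
      apply sum_le_sum
      intro σ _
      obtain ⟨v, h1, h2, h3⟩ := hsig σ
      refine le_trans ?_ h3
      have h1' : (v:ℝ) ≤ s := by exact_mod_cast h1
      have h2' : (Zc I (lk F s N {s} l) σ : ℝ) ≤ v := by exact_mod_cast h2
      have h4 : (0:ℝ) ≤ Zc I (lk F s N {s} l) σ := by positivity
      nlinarith [mul_nonneg (sub_nonneg.2 hstr) (sub_nonneg.2 h2'), mul_nonneg (h4.trans h2') (sub_nonneg.2 h1')]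
    rw [← mul_sum, hsum, htot] at h1
    have h2 : (N.factorial * t : ℝ) * (((t:ℝ) - s) * p) ≤
      (N.factorial * t : ℝ) * ∑ i ∈ range s, (1 - dnst N l (lk F s N {i} l)) := by linarith
    exact le_of_mul_le_mul_left h2 (by positivity)
  · intro hq
    have h1 : ∑ σ, 0.955 * ((t:ℝ) * (Zc I (lk F s N {s} l) σ : ℝ) - (Zc I (lk F s N {s} l) σ : ℝ)^2) ≤
        ∑ σ : Equiv.Perm (Fin N), ∑ i ∈ range s, ((t:ℝ) - Zc I (lk F s N {i} l) σ) := by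
      apply sum_le_sum
      intro σ _
      obtain ⟨v, h1, h2, h3⟩ := hsig σ
      refine le_trans ?_ h3
      have h1' : (v:ℝ) ≤ s := by exact_mod_cast h1
      have h2' : (Zc I (lk F s N {s} l) σ : ℝ) ≤ v := by exact_mod_cast h2
      have h4 : (0:ℝ) ≤ Zc I (lk F s N {s} l) σ := by positivity
      have := quad_ineq t s v _ h2' h1' hq h4 (h2'.trans (h1'.trans hstr))
      linarith
    rw [← mul_sum, sum_sub_distrib, ← mul_sum, hsum, htot] at h1
    have h2 : (N.factorial * t : ℝ) * (0.955 * (p * (t - 1 - t * p))) ≤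
      (N.factorial * t : ℝ) * ∑ i ∈ range s, (1 - dnst N l (lk F s N {i} l)) := by
      nlinarith
    exact le_of_mul_le_mul_left h2 (by positivity)

lemma lk_pair {F : Finset (Finset ℕ)} (hS : Shf F) {s N c u : ℕ} (hu : u + 1 ≤ s) :
    lk F s N (insert (s-1) {s}) c ⊆ lk F s N (insert u {u+1}) c := by
  have hc : ∀ u x : ℕ, ((insert u ({u+1} : Finset ℕ)).filter (· < x)).card =
      (if u < x then 1 else 0) + (if u + 1 < x then 1 else 0) := by
    intro u x
    rw [filter_insert, filter_singleton]
    split_ifs with h1 h2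
    · rw [card_insert_of_notMem (by simp)]; simp
    · simp
    · omega
    · simp
  have e : (insert (s-1) ({s} : Finset ℕ)) = insert (s-1) {(s-1)+1} := by
    rw [show s - 1 + 1 = s by omega]
  rw [e]
  apply lk_dom hS
  · intro x; simp; omega
  · intro x; simp; omega
  · rw [card_insert_of_notMem (by simp), card_insert_of_notMem (by simp)]; simp
  · intro x
    rw [hc, hc]
    split_ifs <;> omega

lemma pf_comb {F : Finset (Finset ℕ)} (hS : Shf F) {s N c b m d0 r0 : ℕ} (hF : NM F s)
    (hbl : b * (c+1) ≤ N)
    (hfull : Full (lk F s N ∅ (c+2)) (c+2) m) (hd : d0 + 2 * r0 = s + 1)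
    (σ : Equiv.Perm (Fin N))
    (h1 : d0 ≤ Zc (fun j : Fin b => blk N (c+1) (c+1) j) (lk F s N {s} (c+1)) σ)
    (h2 : d0 + r0 ≤ Zc (fun j : Fin b => blk N (c+1) c j) (lk F s N (insert (s-1) {s}) c) σ)
    (h3 : ∀ i, 1 ≤ i → i ≤ c + 2 →
      ((phi σ (univ.filter (fun x : Fin N => (x:ℕ) < b * (c+1)))).filter (· < i * m)).card + i * r0 ≤ i * m) :
    False := by
  classical
  set U := phi σ (univ.filter (fun x : Fin N => (x:ℕ) < b * (c+1))) with hU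
  have hle := full_le (by omega) (lk_sub _ _ _ _ _) hfull
  obtain ⟨f, hf1, hf2, hf3⟩ := full_matching (a := r0) (by omega) hfull (range N \ U) (by
    intro i hi1 hi2
    have h4 : i * m ≤ (c+2) * m := Nat.mul_le_mul_right _ hi2
    have h5 : (range N \ U).filter (· < i * m) = range (i*m) \ (U.filter (· < i * m)) := by
      ext x; simp only [mem_filter, mem_sdiff, mem_range]
      constructor
      · rintro ⟨⟨a1, a2⟩, a3⟩; exact ⟨a3, fun h => a2 h.1⟩
      · rintro ⟨a1, a2⟩; exact ⟨⟨by omega, fun h => a2 ⟨h, a1⟩⟩, a1⟩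
    rw [h5, card_sdiff_of_subset, card_range]
    · have := h3 i hi1 hi2
      omega
    · intro x hx; rw [mem_filter] at hx; exact mem_range.2 hx.2)
  obtain ⟨J, hJs, hJc⟩ := exists_subset_card_eq h1
  have h2' : r0 ≤ ((univ.filter (fun j : Fin b => phi σ (blk N (c+1) c j) ∈ lk F s N (insert (s-1) {s}) c)) \ J).card := by
    have := le_card_sdiff J (univ.filter (fun j : Fin b => phi σ (blk N (c+1) c j) ∈ lk F s N (insert (s-1) {s}) c))
    have h2'' : d0 + r0 ≤ (univ.filter (fun j : Fin b => phi σ (blk N (c+1) c j) ∈ lk F s N (insert (s-1) {s}) c)).card := h2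
    omega
  obtain ⟨J', hJs', hJc'⟩ := exists_subset_card_eq h2'
  have hsubU : ∀ (j : Fin b) (c' : ℕ), c' ≤ c + 1 → phi σ (blk N (c+1) c' j) ⊆ U := by
    intro j c' hc'
    apply phi_mono
    intro x hx
    simp only [blk, mem_filter, mem_univ, true_and] at hx ⊢
    have : ((j:ℕ)+1) * (c+1) ≤ b * (c+1) := Nat.mul_le_mul_right _ j.2
    rw [add_mul, one_mul] at this
    omega
  let e1 : J ≃ Fin d0 := J.equivFinOfCardEq hJc
  let e2 : J' ≃ Fin r0 := J'.equivFinOfCardEq hJc'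
  refine nm_links hF (ι := J ⊕ (J' ⊕ Fin r0)) (by simp [hJc, hJc']; omega)
    (fun i => match i with
      | .inl j => {((e1 j : Fin d0) : ℕ)}
      | .inr (.inl j) => insert (d0 + 2 * (e2 j : ℕ)) {d0 + 2 * (e2 j : ℕ) + 1}
      | .inr (.inr _) => ∅)
    (fun i => match i with
      | .inl j => phi σ (blk N (c+1) (c+1) (j : Fin b))
      | .inr (.inl j) => phi σ (blk N (c+1) c (j : Fin b))
      | .inr (.inr j) => f j) ?_ ?_ ?_ ?_
  · rintro (j | j | j)
    · have := (e1 j).2; simp; omega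
    · have := (e2 j).2; intro x; simp; omega
    · simp
  · rintro (i | i | i) (j | j | j) hij
    · have h : (e1 i : ℕ) ≠ e1 j := fun h => hij (by rw [e1.injective (Fin.ext h)])
      simpa using h
    · have := (e1 i).2
      simp; omega
    · simp
    · have := (e1 j).2
      simp; omega
    · have h : (e2 i : ℕ) ≠ e2 j := fun h => hij (by rw [e2.injective (Fin.ext h)])
      simp; omega
    · simp
    · simp
    · simp
    · simp
  · have hdf : ∀ (j : Fin b) (c' : ℕ) (i : Fin r0), c' ≤ c + 1 → Disjoint (phi σ (blk N (c+1) c' j)) (f i) := by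
      intro j c' i hc'
      refine disjoint_of_subset_left (hsubU j c' hc') ?_
      refine disjoint_of_subset_right (hf2 i) ?_
      exact disjoint_sdiff
    have hJJ' : ∀ (i : J) (j : J'), ((i : Fin b) : ℕ) ≠ ((j : Fin b) : ℕ) := by
      intro i j h
      have := (mem_sdiff.1 (hJs' j.2)).2
      rw [← Fin.ext h] at this
      exact this i.2
    rintro (i | i | i) (j | j | j) hij
    · exact (phi_disj σ).2 (blk_disj le_rfl le_rfl (fun h => hij (by rw [Subtype.ext (Fin.ext h)])))
    · exact (phi_disj σ).2 (blk_disj le_rfl (by omega) (hJJ' i j))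
    · exact hdf _ _ _ le_rfl
    · exact (phi_disj σ).2 (blk_disj (by omega) le_rfl (hJJ' j i).symm)
    · exact (phi_disj σ).2 (blk_disj (by omega) (by omega) (fun h => hij (by rw [Subtype.ext (Fin.ext h)])))
    · exact hdf _ _ _ (by omega)
    · exact (hdf _ _ _ le_rfl).symm
    · exact (hdf _ _ _ (by omega)).symm
    · exact hf3 _ _ (fun h => hij (by rw [h]))
  · rintro (j | j | j)
    · have := (mem_filter.1 (hJs j.2)).2
      have := lk_nest hS (i := (e1 j : ℕ)) (j := s) (by have := (e1 j).2; omega) le_rfl this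
      exact (mem_lk.1 this).2
    · have := (mem_filter.1 (mem_sdiff.1 (hJs' j.2)).1).2
      have := lk_pair hS (u := d0 + 2 * (e2 j : ℕ)) (by have := (e2 j).2; omega) this
      exact (mem_lk.1 this).2
    · exact (mem_lk.1 (hf1 j)).2

lemma pc1_shf (R : ℕ) : Shf ((range R).powersetCard 1) := by
  intro A hA i j hij hj hi
  rw [mem_powersetCard] at hA ⊢
  have := mem_range.1 (hA.1 hj)
  refine ⟨?_, ?_⟩
  · intro x hx
    rw [mem_insert, mem_erase] at hx
    rcases hx with rfl | hx
    · exact mem_range.2 (by omega)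
    · exact hA.1 hx.2
  · rw [card_insert_of_notMem (by simp [hi]), card_erase_of_mem hj, hA.2]

lemma U_count {N w R : ℕ} (hw : w ≤ N) (σ : Equiv.Perm (Fin N)) :
    ((phi σ (univ.filter (fun x : Fin N => (x:ℕ) < w))).filter (· < R)).card ≤
      Zc (fun j : Fin w => {Fin.castLE hw j}) ((range R).powersetCard 1) σ := by
  classical
  unfold Zc
  refine le_trans (card_le_card ?_) (card_image_le (f := fun j : Fin w => ((σ (Fin.castLE hw j) : Fin N) : ℕ)))
  intro y hy
  simp only [phi, mem_filter, mem_map, mem_univ, true_and] at hy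
  obtain ⟨⟨z, ⟨x, hx, rfl⟩, rfl⟩, hR⟩ := hy
  rw [mem_image]
  refine ⟨⟨x, hx⟩, ?_, rfl⟩
  rw [mem_filter]
  refine ⟨mem_univ _, ?_⟩
  rw [mem_powersetCard]
  refine ⟨?_, by rw [phi_card]; simp⟩
  simp only [phi, map_singleton, singleton_subset_iff, mem_range]
  exact hR

lemma geom_bd (M : ℕ) : ∑ g ∈ range M, ((1:ℝ)/1.005)^(g+1) = 200 * (1 - (1/1.005)^M) := by
  induction M with
  | zero => simp
  | succ M ih => rw [sum_range_succ, ih, pow_succ]; ring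

lemma U_conc {N w m K : ℕ} (hw : w ≤ N) (hm : 1 ≤ m) (hK : K * m ≤ N) (A : ℝ)
    (hA : 0.005 * (m:ℝ) ≤ A / 1.005 - (w:ℝ) / N * m)
    (S : Finset (Equiv.Perm (Fin N)))
    (hS : ∀ σ ∈ S, ∃ i, 1 ≤ i ∧ i ≤ K ∧
      i * A < ((phi σ (univ.filter (fun x : Fin N => (x:ℕ) < w))).filter (· < i * m)).card) :
    (S.card : ℝ) * m ≤ N.factorial * 8000000 := by
  classical
  rcases S.eq_empty_or_nonempty with rfl | ⟨σ0, hσ0⟩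
  · simp
  have hN : 1 ≤ N := by
    obtain ⟨i, h1, h2, _⟩ := hS σ0 hσ0
    have : 1 ≤ K * m := Nat.mul_pos (by omega) hm
    omega
  have hmr : (1:ℝ) ≤ m := by exact_mod_cast hm
  have hNr : (1:ℝ) ≤ N := by exact_mod_cast hN
  have hwr : (w:ℝ) ≤ N := by exact_mod_cast hw
  have hρ0 : 0 ≤ (w:ℝ)/N := by positivity
  have hρ1 : (w:ℝ)/N ≤ 1 := div_le_one_of_le₀ hwr (by positivity)
  have hApos : 0 < A := by
    have : 0 ≤ (w:ℝ) / N * m := by positivity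
    have h2 : 0 < A / 1.005 := by linarith
    have h3 : A = A / 1.005 * 1.005 := by field_simp
    rw [h3]; positivity
  obtain ⟨M, hM⟩ := pow_unbounded_of_one_lt (K:ℝ) (show (1:ℝ) < 1.005 by norm_num)
  set R : ℕ → ℕ := fun g => min N ⌊(1.005:ℝ)^(g+1) * m⌋₊ with hR
  set Z : ℕ → Equiv.Perm (Fin N) → ℕ := fun g σ =>
    Zc (fun j : Fin w => {Fin.castLE hw j}) ((range (R g)).powersetCard 1) σ with hZ
  set Sg : ℕ → Finset (Equiv.Perm (Fin N)) := fun g =>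
    univ.filter (fun σ => (1.005:ℝ)^g * A < Z g σ) with hSg
  have hcov : S ⊆ (range M).biUnion Sg := by
    intro σ hσ
    obtain ⟨i, h1, h2, h3⟩ := hS σ hσ
    obtain ⟨g, hg1, hg2⟩ := exists_nat_pow_near (show (1:ℝ) ≤ i by exact_mod_cast h1)
      (show (1:ℝ) < 1.005 by norm_num)
    rw [mem_biUnion]
    refine ⟨g, ?_, ?_⟩
    · rw [mem_range]
      by_contra hcon
      push Not at hcon
      have a1 : (1.005:ℝ)^M ≤ 1.005^g := pow_le_pow_right₀ (by norm_num) hcon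
      have a2 : (i:ℝ) ≤ K := by exact_mod_cast h2
      linarith
    · rw [hSg, mem_filter]
      refine ⟨mem_univ _, ?_⟩
      have a1 : i * m ≤ R g := by
        rw [hR]
        refine le_min (le_trans (Nat.mul_le_mul_right _ h2) hK) ?_
        apply Nat.le_floor
        push_cast
        exact mul_le_mul_of_nonneg_right hg2.le (by positivity)
      have a2 := (cnt_mono (phi σ (univ.filter (fun x : Fin N => (x:ℕ) < w))) a1).trans (U_count hw σ)
      have a3 : (((phi σ (univ.filter (fun x : Fin N => (x:ℕ) < w))).filter (· < i * m)).card : ℝ) ≤ Z g σ := by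
        exact_mod_cast a2
      have a4 : (1.005:ℝ)^g * A ≤ i * A := mul_le_mul_of_nonneg_right hg1 hApos.le
      linarith
  have hSgc : ∀ g, ((Sg g).card : ℝ) * m ≤ N.factorial * 40000 * (1/1.005)^(g+1) := by
    intro g
    set P := (1.005:ℝ)^(g+1) with hP
    have hP1 : 1 ≤ P := one_le_pow₀ (by norm_num)
    have hRN : R g ≤ N := min_le_left _ _
    have hRP : (R g : ℝ) ≤ P * m := by
      refine le_trans ?_ (Nat.floor_le (by positivity : 0 ≤ P * m))
      exact_mod_cast min_le_right _ _
    have hmu : (w:ℝ) / N * R g ≤ (w:ℝ) / N * (P * m) := mul_le_mul_of_nonneg_left hRP hρ0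
    have hch := Z_cheb (N := N) (l := 1) (fun j : Fin w => {Fin.castLE hw j}) (by simp)
      (by intro i j hij; simpa using hij) hN (G := (range (R g)).powersetCard 1)
      (powersetCard_mono (range_subset_range.2 hRN)) (pc1_shf _) ((w:ℝ)/N * R g)
      (by simp; ring) (P * (0.005 * m)) (by positivity) (Sg g) (by
        intro σ hσ
        rw [hSg, mem_filter] at hσ
        have b1 := hσ.2
        refine le_trans ?_ (le_abs_self _)
        have b2 : (1.005:ℝ)^g * A = P * (A / 1.005) := by rw [hP, pow_succ]; field_simp
        have b3 : P * (0.005 * m) ≤ P * (A / 1.005 - (w:ℝ) / N * m) :=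
          mul_le_mul_of_nonneg_left hA (by linarith)
        rw [b2] at b1
        have b4 : (Z g σ : ℝ) = (Zc (fun j : Fin w => {Fin.castLE hw j}) ((range (R g)).powersetCard 1) σ : ℝ) := rfl
        rw [← b4]
        nlinarith)
    have hNf : (0:ℝ) < N.factorial := by exact_mod_cast Nat.factorial_pos N
    have c1 : ((Sg g).card : ℝ) * (P * (0.005 * m))^2 ≤ N.factorial * (P * m) := by
      refine hch.trans (mul_le_mul_of_nonneg_left (hmu.trans ?_) hNf.le)
      have : 0 ≤ P * m := by positivity
      nlinarith
    have c2 : (1/1.005 : ℝ)^(g+1) = 1 / P := by rw [one_div_pow]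
    rw [c2, mul_one_div, le_div_iff₀ (by linarith)]
    have c3 : (P * m) * (((Sg g).card : ℝ) * m * P) ≤ (P * m) * (N.factorial * 40000) := by
      have : (P * m) * (((Sg g).card : ℝ) * m * P) = 40000 * (((Sg g).card : ℝ) * (P * (0.005 * m))^2) := by ring
      rw [this]; linarith
    exact le_of_mul_le_mul_left c3 (by positivity)
  have hfin : (S.card : ℝ) ≤ ∑ g ∈ range M, ((Sg g).card : ℝ) := by
    exact_mod_cast (card_le_card hcov).trans card_biUnion_le
  have hNf : (0:ℝ) < N.factorial := by exact_mod_cast Nat.factorial_pos N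
  calc (S.card : ℝ) * m ≤ (∑ g ∈ range M, ((Sg g).card : ℝ)) * m := by gcongr
    _ = ∑ g ∈ range M, ((Sg g).card : ℝ) * m := by rw [sum_mul]
    _ ≤ ∑ g ∈ range M, (N.factorial:ℝ) * 40000 * ((1:ℝ)/1.005)^(g+1) := sum_le_sum (fun g _ => hSgc g)
    _ = N.factorial * 40000 * (200 * (1 - (1/1.005)^M)) := by rw [← mul_sum, geom_bd]
    _ ≤ N.factorial * 8000000 := by
      have : (0:ℝ) ≤ (1/1.005)^M := by positivity
      nlinarith

lemma q_lemma {F : Finset (Finset ℕ)} (hS : Shf F) {s N c : ℕ} (hs : 2 ≤ s) (hF : NM F s)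
    (hN : (5/3:ℝ) * s * (c+1) - 1 ≤ N) :
    ((5/3:ℝ) * s - 1) * dnst N (c+1) (lk F s N {s} (c+1)) ≤ s * dnst N c (lk F s N (insert (s-1) {s}) c) := by
  have hsr : (2:ℝ) ≤ s := by exact_mod_cast hs
  have hnf : ¬ Full (lk F s N {s} (c+1)) (c+1) (s+1) := by
    apply not_full_lk hF (fun i => {(i:ℕ)})
    · intro i; simp [Fin.is_le]
    · intro i j hij; simp [Fin.ext_iff] at hij ⊢; omega
    · omega
    · intro i; exact lk_nest hS (Fin.is_le i) le_rfl
  have hk := katona (lk_shf hS (by simp)) (by omega) (fun A hA => (mem_lk.1 hA).1.2) hnf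
  have hsh := card_le_card (lk_shadow hS (s := s) (N := N) (T := {s}) (by simp) (i := s-1) (by omega) (by simp; omega) (c := c))
  have h1 : (lk F s N {s} (c+1)).card ≤ s * (lk F s N (insert (s-1) {s}) c).card :=
    hk.trans (Nat.mul_le_mul_left _ hsh)
  have hc1 : (c:ℝ) + 1 ≤ N := by
    have h0 : (0:ℝ) ≤ c := by positivity
    have h2 : 2 * ((c:ℝ)+1) ≤ s * (c+1) := mul_le_mul_of_nonneg_right hsr (by linarith)
    linarith
  have hcN : c + 1 ≤ N := by exact_mod_cast hc1
  have e := Nat.choose_succ_right_eq N c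
  have er : (N.choose (c+1) : ℝ) * (c+1) = N.choose c * (N - c) := by
    have h2 : ((N - c : ℕ) : ℝ) = N - c := by push_cast [Nat.cast_sub (show c ≤ N by omega)]; ring
    rw [← h2]; exact_mod_cast e
  have p1 : (0:ℝ) < N.choose (c+1) := by exact_mod_cast Nat.choose_pos hcN
  have p2 : (0:ℝ) < N.choose c := by exact_mod_cast Nat.choose_pos (show c ≤ N by omega)
  unfold dnst
  have h1r : ((lk F s N {s} (c+1)).card : ℝ) ≤ s * (lk F s N (insert (s-1) {s}) c).card := by exact_mod_cast h1
  set g : ℝ := ((lk F s N {s} (c+1)).card : ℝ)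
  set q : ℝ := ((lk F s N (insert (s-1) {s}) c).card : ℝ)
  have hg : 0 ≤ g := by positivity
  have hq : 0 ≤ q := by positivity
  rw [mul_div_assoc', mul_div_assoc', div_le_div_iff₀ p1 p2]
  have hcp : (0:ℝ) < c + 1 := by positivity
  have a1 : ((5/3:ℝ) * s - 1) * (c+1) ≤ N - c := by linarith
  have a2 : (((5/3:ℝ) * s - 1) * g * N.choose c) * (c+1) ≤ (s * q * N.choose (c+1)) * (c+1) := by
    calc _ = (g * N.choose c) * (((5/3:ℝ) * s - 1) * (c+1)) := by ring
      _ ≤ (g * N.choose c) * (N - c) := mul_le_mul_of_nonneg_left a1 (by positivity)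
      _ ≤ ((s * q) * N.choose c) * (N - c) := by
        apply mul_le_mul_of_nonneg_right _ (by linarith)
        exact mul_le_mul_of_nonneg_right h1r p2.le
      _ = (s * q) * (N.choose c * (N - c)) := by ring
      _ = _ := by rw [← er]; ring
  exact le_of_mul_le_mul_right a2 hcp

lemma c_fin {s a f : ℝ} (hs : 0 < s) (h : a * (0.003 * s)^2 ≤ f * (1.17 * s)) :
    a * s ≤ f * 130000 := by
  have h2 : (a * s) * s ≤ (f * 130000) * s := by nlinarith
  exact le_of_mul_le_mul_right h2 hs

set_option maxHeartbeats 4000000 in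
lemma pf_contra {F : Finset (Finset ℕ)} (hS : Shf F) {s N c t m : ℕ} (hs : 100000000 ≤ s) (hF : NM F s)
    (ht : t = 5 * s / 3 - 1) (htl : t * (c+1) ≤ N) (hN : (5/3:ℝ) * s * (c+1) - 1 ≤ N)
    (hfull : Full (lk F s N ∅ (c+2)) (c+2) m) (hms : m ≤ s) (hmt : t < m + 1 + s)
    (hpm : 0.369 * (s:ℝ) ≤ dnst N (c+1) (lk F s N {s} (c+1)) * m) : False := by
  classical
  have hq := q_lemma hS (by omega) hF hN
  have hp1 := dnst_le_one (lk_sub F s N {s} (c+1))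
  have hq1 := dnst_le_one (lk_sub F s N (insert (s-1) {s}) c)
  have hp0 := dnst_nonneg N (c+1) (lk F s N {s} (c+1))
  have hq0 := dnst_nonneg N c (lk F s N (insert (s-1) {s}) c)
  set p := dnst N (c+1) (lk F s N {s} (c+1)) with hp
  set q := dnst N c (lk F s N (insert (s-1) {s}) c) with hqd
  obtain ⟨b, hb⟩ : ∃ b, b = 117 * m / 100 := ⟨_, rfl⟩
  obtain ⟨r0, hr0⟩ : ∃ r0, r0 = 2 * s / 7 := ⟨_, rfl⟩
  obtain ⟨d0, hd0⟩ : ∃ d0, d0 + 2 * r0 = s + 1 := ⟨s + 1 - 2 * r0, by omega⟩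
  have hbt : b ≤ t := by omega
  have hbN : b * (c+1) ≤ N := le_trans (Nat.mul_le_mul_right _ hbt) htl
  -- real facts
  have rs : (100000000:ℝ) ≤ s := by exact_mod_cast hs
  have rm1 : (m:ℝ) ≤ s := by exact_mod_cast hms
  have rm2 : 0.66 * (s:ℝ) ≤ m := by
    have : 66 * s ≤ 100 * m := by omega
    have : 66 * (s:ℝ) ≤ 100 * m := by exact_mod_cast this
    linarith
  have rb1 : (b:ℝ) ≤ 1.17 * m := by
    have : 100 * b ≤ 117 * m := by omega
    have : 100 * (b:ℝ) ≤ 117 * m := by exact_mod_cast this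
    linarith
  have rb2 : 1.17 * (m:ℝ) - 1 ≤ b := by
    have : 117 * m ≤ 100 * b + 100 := by omega
    have : 117 * (m:ℝ) ≤ 100 * b + 100 := by exact_mod_cast this
    linarith
  have rr1 : (r0:ℝ) ≤ 2/7 * s := by
    have : 7 * r0 ≤ 2 * s := by omega
    have : 7 * (r0:ℝ) ≤ 2 * s := by exact_mod_cast this
    linarith
  have rr2 : 2/7 * (s:ℝ) - 1 ≤ r0 := by
    have : 2 * s ≤ 7 * r0 + 7 := by omega
    have : 2 * (s:ℝ) ≤ 7 * r0 + 7 := by exact_mod_cast this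
    linarith
  have rd : (d0:ℝ) + 2 * r0 = s + 1 := by exact_mod_cast hd0
  have rt : 1.6666 * (s:ℝ) ≤ t := by
    have : 16666 * s ≤ 10000 * t := by omega
    have : 16666 * (s:ℝ) ≤ 10000 * t := by exact_mod_cast this
    linarith
  have rbN : (b:ℝ) * (c+1) ≤ N := by exact_mod_cast hbN
  have rtl : (t:ℝ) * (c+1) ≤ N := by exact_mod_cast htl
  have hcr : (0:ℝ) < c + 1 := by positivity
  have hNpos : (0:ℝ) < N := by nlinarith
  have hcN : c + 1 ≤ N := le_trans (Nat.le_mul_of_pos_left _ (by omega)) htl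
  have hNf : (0:ℝ) < N.factorial := by exact_mod_cast Nat.factorial_pos N
  set Z1 : Equiv.Perm (Fin N) → ℕ := fun σ =>
    Zc (fun j : Fin b => blk N (c+1) (c+1) j) (lk F s N {s} (c+1)) σ with hZ1
  set Z2 : Equiv.Perm (Fin N) → ℕ := fun σ =>
    Zc (fun j : Fin b => blk N (c+1) c j) (lk F s N (insert (s-1) {s}) c) σ with hZ2
  set U : Equiv.Perm (Fin N) → Finset ℕ := fun σ =>
    phi σ (univ.filter (fun x : Fin N => (x:ℕ) < b * (c+1))) with hU
  set S1 := univ.filter (fun σ : Equiv.Perm (Fin N) => Z1 σ < d0) with hS1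
  set S2 := univ.filter (fun σ : Equiv.Perm (Fin N) => Z2 σ < d0 + r0) with hS2
  set S3 := univ.filter (fun σ : Equiv.Perm (Fin N) => ∃ i, 1 ≤ i ∧ i ≤ c + 2 ∧
    (i:ℝ) * ((m:ℝ) - r0) < ((U σ).filter (· < i * m)).card) with hS3
  have bp : 0.43173 * (s:ℝ) - 1 ≤ b * p := by
    have h1 : (1.17 * (m:ℝ) - 1) * p ≤ b * p := mul_le_mul_of_nonneg_right rb2 hp0
    nlinarith
  have bq : 0.7195 * (s:ℝ) - 2 ≤ b * q := by
    have h2 : (1.66666 * (s:ℝ)) * p ≤ s * q := by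
      refine le_trans (mul_le_mul_of_nonneg_right ?_ hp0) hq
      linarith
    have h3 : 1.66666 * p ≤ q := by
      have : (s:ℝ) * (1.66666 * p) ≤ s * q := by linarith
      exact le_of_mul_le_mul_left this (by linarith)
    have h4 : (b:ℝ) * (1.66666 * p) ≤ b * q := mul_le_mul_of_nonneg_left h3 (by positivity)
    nlinarith
  have c1 : (S1.card : ℝ) * s ≤ N.factorial * 130000 := by
    have h := Z_cheb (N := N) (l := c+1) (fun j : Fin b => blk N (c+1) (c+1) j)
      (fun j => blk_card (blk_bound hbN j le_rfl))
      (fun i j hij => blk_disj le_rfl le_rfl (fun h => hij (Fin.ext h))) hcN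
      (lk_sub F s N {s} (c+1)) (lk_shf hS (by simp)) (b * p) (by simp [hp, dnst])
      (0.003 * s) (by positivity) S1 (by
        intro σ hσ
        rw [hS1, mem_filter] at hσ
        have h1 : (Z1 σ : ℝ) ≤ d0 := by exact_mod_cast hσ.2.le
        rw [abs_sub_comm]
        refine le_trans ?_ (le_abs_self _)
        have e : (Zc (fun j : Fin b => blk N (c+1) (c+1) j) (lk F s N {s} (c+1)) σ : ℝ) = Z1 σ := rfl
        rw [e]
        linarith)
    have h2 : (b:ℝ) * p ≤ 1.17 * s := by
      have : (b:ℝ) * p ≤ b * 1 := mul_le_mul_of_nonneg_left hp1 (by positivity)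
      linarith
    have h3 := h.trans (mul_le_mul_of_nonneg_left h2 hNf.le)
    have h4 : (s:ℝ) * ((S1.card : ℝ) * s) ≤ s * (N.factorial * 130000) := by nlinarith
    exact le_of_mul_le_mul_left h4 (by linarith)
  have c2 : (S2.card : ℝ) * s ≤ N.factorial * 130000 := by
    have h := Z_cheb (N := N) (l := c) (fun j : Fin b => blk N (c+1) c j)
      (fun j => blk_card (blk_bound hbN j (by omega)))
      (fun i j hij => blk_disj (by omega) (by omega) (fun h => hij (Fin.ext h))) (by omega)
      (lk_sub F s N (insert (s-1) {s}) c) (lk_shf hS (by intro x; simp; omega)) (b * q) (by simp [hqd, dnst])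
      (0.003 * s) (by positivity) S2 (by
        intro σ hσ
        rw [hS2, mem_filter] at hσ
        have h1 : (Z2 σ : ℝ) ≤ d0 + r0 := by exact_mod_cast hσ.2.le
        rw [abs_sub_comm]
        refine le_trans ?_ (le_abs_self _)
        have e : (Zc (fun j : Fin b => blk N (c+1) c j) (lk F s N (insert (s-1) {s}) c) σ : ℝ) = Z2 σ := rfl
        rw [e]
        linarith)
    have h2 : (b:ℝ) * q ≤ 1.17 * s := by
      have : (b:ℝ) * q ≤ b * 1 := mul_le_mul_of_nonneg_left hq1 (by positivity)
      linarith
    have h3 := h.trans (mul_le_mul_of_nonneg_left h2 hNf.le)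
    have h4 : (s:ℝ) * ((S2.card : ℝ) * s) ≤ s * (N.factorial * 130000) := by nlinarith
    exact le_of_mul_le_mul_left h4 (by linarith)
  have c3 : (S3.card : ℝ) * m ≤ N.factorial * 8000000 := by
    apply U_conc (K := c+2) hbN (by omega) (full_le (by omega) (lk_sub _ _ _ _ _) hfull) ((m:ℝ) - r0)
    · have h1 : ((b * (c+1) : ℕ) : ℝ) / N ≤ 0.70203 * m / s := by
        rw [div_le_div_iff₀ hNpos (by linarith)]
        push_cast
        have h2 : (b:ℝ) * s ≤ 0.70203 * m * t := by
          have : (b:ℝ) * s ≤ 1.17 * m * s := mul_le_mul_of_nonneg_right rb1 (by linarith)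
          have : 0.70203 * (m:ℝ) * (1.6666 * s) ≤ 0.70203 * m * t := mul_le_mul_of_nonneg_left rt (by positivity)
          nlinarith
        calc (b:ℝ) * (c+1) * s = (b * s) * (c+1) := by ring
          _ ≤ (0.70203 * m * t) * (c+1) := mul_le_mul_of_nonneg_right h2 hcr.le
          _ = 0.70203 * m * (t * (c+1)) := by ring
          _ ≤ _ := mul_le_mul_of_nonneg_left rtl (by positivity)
      have h3 : ((b * (c+1) : ℕ) : ℝ) / N * m ≤ 0.70203 * m / s * m := mul_le_mul_of_nonneg_right h1 (by positivity)
      have h4 : 0.70203 * (m:ℝ) / s * m ≤ ((m:ℝ) - 2/7 * s) / 1.005 - 0.005 * m := by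
        have hs0 : (0:ℝ) < s := by linarith
        have : 0.70203 * (m:ℝ) / s * m = (0.70203 * m * m) / s := by ring
        rw [this, div_le_iff₀ hs0]
        have := mul_nonneg (sub_nonneg.2 rm1) (sub_nonneg.2 rm2)
        have h5 : (((m:ℝ) - 2/7 * s) / 1.005 - 0.005 * m) * s = (m * s - 2/7 * s * s)/1.005 - 0.005 * m * s := by ring
        rw [h5]
        have h6 : 0.995 * (m * s) - 0.2844 * (s*s) ≤ ((m:ℝ) * s - 2/7 * s * s)/1.005 := by
          rw [le_div_iff₀ (by norm_num)]
          nlinarith [mul_nonneg (sub_nonneg.2 rm2) hs0.le]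
        nlinarith [mul_nonneg (sub_nonneg.2 rm2) hs0.le, mul_nonneg (sub_nonneg.2 rm1) hs0.le]
      have h7 : ((m:ℝ) - 2/7 * s) / 1.005 ≤ ((m:ℝ) - r0) / 1.005 := by
        apply div_le_div_of_nonneg_right _ (by norm_num)
        linarith
      linarith
    · intro σ hσ
      rw [hS3, mem_filter] at hσ
      exact hσ.2
  have hex : ∃ σ, σ ∉ S1 ∪ S2 ∪ S3 := by
    by_contra hcon
    push Not at hcon
    have h1 : (univ : Finset (Equiv.Perm (Fin N))).card ≤ (S1 ∪ S2 ∪ S3).card := card_le_card (fun σ _ => hcon σ)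
    have h2 := h1.trans ((card_union_le _ _).trans (Nat.add_le_add_right (card_union_le _ _) _))
    rw [card_univ, Fintype.card_perm, Fintype.card_fin] at h2
    have h3 : (N.factorial : ℝ) ≤ S1.card + S2.card + S3.card := by exact_mod_cast h2
    have h4 : (S3.card : ℝ) * (0.66 * s) ≤ N.factorial * 8000000 :=
      (mul_le_mul_of_nonneg_left rm2 (by positivity)).trans c3
    have h5 : (N.factorial : ℝ) * s ≤ (S1.card + S2.card + S3.card) * s :=
      mul_le_mul_of_nonneg_right h3 (by linarith)
    have h6 : (N.factorial : ℝ) * 100000000 ≤ N.factorial * s := mul_le_mul_of_nonneg_left rs hNf.le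
    nlinarith
  obtain ⟨σ, hσ⟩ := hex
  rw [mem_union, mem_union, not_or, not_or] at hσ
  obtain ⟨⟨g1, g2⟩, g3⟩ := hσ
  simp only [hS1, hS2, hS3, mem_filter, mem_univ, true_and] at g1 g2 g3
  push Not at g1 g2 g3
  refine pf_comb hS hF hbN hfull hd0 σ g1 g2 ?_
  intro i h1 h2
  have h3 := g3 i h1 h2
  have h4 : (((U σ).filter (· < i * m)).card : ℝ) + i * r0 ≤ i * m := by linarith
  exact_mod_cast h4

lemma caseC {s t m p : ℝ} (hs : 100000000 ≤ s) (ht1 : 5/3 * s - 2 ≤ t) (ht2 : t ≤ 5/3 * s)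
    (hm1 : t - s - 1 ≤ m) (hm2 : m ≤ s) (hp : 0 ≤ p) (hpm : p * m ≤ 0.369 * s) :
    (m + 1) * p ≤ 0.955 * (p * (t - 1 - t * p)) := by
  have hm0 : 0.66 * s ≤ m := by linarith
  have hmp : 0 < m := by linarith
  have h1 : t * (p * m) ≤ 5/3 * s * (0.369 * s) :=
    mul_le_mul ht2 hpm (mul_nonneg hp hmp.le) (by linarith)
  have h2 : (m + 1) * m ≤ 0.955 * (t - 1 - t * p) * m := by
    have h3 : (5/3 * s - 2) * m ≤ t * m := mul_le_mul_of_nonneg_right ht1 hmp.le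
    have hms : s * 100000000 ≤ s * s := mul_le_mul_of_nonneg_left hs (by linarith)
    have h4 : 0 ≤ (s - m) * (m - (2/3 * s - 3)) := mul_nonneg (by linarith) (by linarith)
    have h5 : 0 ≤ (s-m) * s := mul_nonneg (by linarith) (by linarith)
    nlinarith
  have h3 := le_of_mul_le_mul_right h2 hmp
  nlinarith [mul_le_mul_of_nonneg_left h3 hp]

lemma main_est {F : Finset (Finset ℕ)} (hS : Shf F) {s N c : ℕ} (hs : 100000000 ≤ s) (hF : NM F s)
    (hN : (5/3:ℝ) * s * (c+1) - 1 ≤ N) :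
    (lk F s N ∅ (c+2)).card + ∑ i ∈ range (s+1), (lk F s N {i} (c+1)).card ≤ s * N.choose (c+1) := by
  classical
  have rs : (100000000:ℝ) ≤ s := by exact_mod_cast hs
  obtain ⟨t, ht⟩ : ∃ t, t = 5 * s / 3 - 1 := ⟨_, rfl⟩
  have rt1 : (5/3:ℝ) * s - 2 ≤ t := by
    have : 5 * s ≤ 3 * t + 6 := by omega
    have : 5 * (s:ℝ) ≤ 3 * t + 6 := by exact_mod_cast this
    linarith
  have rt2 : (t:ℝ) ≤ 5/3 * s - 1 := by
    have : 3 * t + 3 ≤ 5 * s := by omega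
    have : 3 * (t:ℝ) + 3 ≤ 5 * s := by exact_mod_cast this
    linarith
  have hc0 : (0:ℝ) ≤ c := by positivity
  have htl : t * (c+1) ≤ N := by
    have : (t:ℝ) * (c+1) ≤ (5/3 * s - 1) * (c+1) := mul_le_mul_of_nonneg_right rt2 (by linarith)
    have : (t:ℝ) * (c+1) ≤ N := by linarith
    exact_mod_cast this
  have hcN : c + 1 ≤ N := le_trans (Nat.le_mul_of_pos_left _ (by omega)) htl
  obtain ⟨m, hms, hfull, hnf⟩ : ∃ m, m ≤ s ∧ Full (lk F s N ∅ (c+2)) (c+2) m ∧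
      ¬ Full (lk F s N ∅ (c+2)) (c+2) (m+1) := by
    have h0 : Full (lk F s N ∅ (c+2)) (c+2) 0 := by
      intro A _ h
      have := h 1 le_rfl (by omega)
      simp at this
    have h1 : ¬ Full (lk F s N ∅ (c+2)) (c+2) (s+1) :=
      not_full_lk hF (fun _ => ∅) (by simp) (by simp) (by omega) (fun _ => subset_rfl)
    by_contra hcon
    push Not at hcon
    have : ∀ m, m ≤ s + 1 → Full (lk F s N ∅ (c+2)) (c+2) m := by
      intro m
      induction m with
      | zero => intro _; exact h0
      | succ m ih => intro h; exact hcon m (by omega) (ih (by omega))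
    exact h1 (this _ le_rfl)
  have hk := katona (lk_shf hS (by simp)) (by omega) (fun A hA => (mem_lk.1 hA).1.2) hnf
  have hsh := card_le_card (lk_shadow hS (s := s) (N := N) (T := ∅) (by simp) (i := s) (by omega) (by simp) (c := c+1))
  have hG0 : (lk F s N ∅ (c+2)).card ≤ m * (lk F s N {s} (c+1)).card := by
    refine hk.trans (Nat.mul_le_mul_left _ ?_)
    simpa using hsh
  obtain ⟨-, hB, hC⟩ := mean_ineq hS hF htl (by omega) (by omega)
  have hp0 := dnst_nonneg N (c+1) (lk F s N {s} (c+1))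
  have key : ((m:ℝ) + 1) * dnst N (c+1) (lk F s N {s} (c+1)) ≤
      ∑ i ∈ range s, (1 - dnst N (c+1) (lk F s N {i} (c+1))) := by
    by_cases h1 : m + 1 + s ≤ t
    · refine le_trans (mul_le_mul_of_nonneg_right ?_ hp0) hB
      have : (m:ℝ) + 1 + s ≤ t := by exact_mod_cast h1
      linarith
    push Not at h1
    by_cases h2 : 0.369 * (s:ℝ) ≤ dnst N (c+1) (lk F s N {s} (c+1)) * m
    · exact (pf_contra hS hs hF ht htl hN hfull hms h1 h2).elim
    push Not at h2
    have h1r : (t:ℝ) < m + 1 + s := by exact_mod_cast h1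
    refine le_trans (caseC rs rt1 (by linarith) (by linarith) (by exact_mod_cast hms) hp0 h2.le) (hC ?_)
    nlinarith
  have p1 : (0:ℝ) < N.choose (c+1) := by exact_mod_cast Nat.choose_pos hcN
  have e : ∀ i, ((lk F s N {i} (c+1)).card : ℝ) = dnst N (c+1) (lk F s N {i} (c+1)) * N.choose (c+1) := by
    intro i; unfold dnst; rw [div_mul_cancel₀ _ p1.ne']
  have hG0r : ((lk F s N ∅ (c+2)).card : ℝ) ≤ m * (lk F s N {s} (c+1)).card := by exact_mod_cast hG0
  have fin : ((lk F s N ∅ (c+2)).card : ℝ) + ∑ i ∈ range (s+1), ((lk F s N {i} (c+1)).card : ℝ) ≤ s * N.choose (c+1) := by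
    rw [sum_range_succ]
    simp only [e] at hG0r ⊢
    rw [← sum_mul]
    rw [sum_sub_distrib] at key
    simp only [sum_const, card_range, nsmul_eq_mul, mul_one] at key
    have := mul_le_mul_of_nonneg_right key p1.le
    linarith
  exact_mod_cast fin

lemma fil_card {F : Finset (Finset ℕ)} {s N k : ℕ} (hF : F ⊆ (range (N+s+1)).powersetCard k)
    {T : Finset ℕ} (hT : T ⊆ range (s+1)) {c : ℕ} (hc : T.card + c = k) :
    (F.filter (fun A => A ∩ range (s+1) = T)).card = (lk F s N T c).card := by
  classical
  symm
  apply card_bij (fun A _ => T ∪ tau s A)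
  · intro A hA
    rw [mem_lk] at hA
    rw [mem_filter]
    refine ⟨hA.2, ?_⟩
    ext x
    simp only [mem_inter, mem_union, mem_range]
    constructor
    · rintro ⟨h1 | h1, h2⟩
      · exact h1
      · have := tau_gt h1; omega
    · intro h; exact ⟨Or.inl h, mem_range.1 (hT h)⟩
  · intro A hA B hB h
    ext x
    have h1 : x + (s+1) ∈ T ∪ tau s A ↔ x + (s+1) ∈ T ∪ tau s B := by rw [h]
    have h2 : x + (s+1) ∉ T := fun h => by have := mem_range.1 (hT h); omega
    simpa [h2, add_mem_tau] using h1
  · intro B hB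
    rw [mem_filter] at hB
    obtain ⟨hBF, hBT⟩ := hB
    have hB' := mem_powersetCard.1 (hF hBF)
    have hu : T ∪ tau s ((range N).filter (fun x => x + (s+1) ∈ B)) = B := by
      ext x
      rw [mem_union, mem_tau]
      constructor
      · rintro (h | ⟨y, hy, rfl⟩)
        · rw [← hBT] at h; exact (mem_inter.1 h).1
        · exact (mem_filter.1 hy).2
      · intro h
        by_cases hx : x < s + 1
        · left; rw [← hBT]; exact mem_inter.2 ⟨h, mem_range.2 hx⟩
        · right
          have := mem_range.1 (hB'.1 h)
          refine ⟨x - (s+1), ?_, by omega⟩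
          rw [mem_filter, mem_range]
          refine ⟨by omega, ?_⟩
          rwa [show x - (s+1) + (s+1) = x by omega]
    refine ⟨(range N).filter (fun x => x + (s+1) ∈ B), ?_, hu⟩
    rw [mem_lk, hu]
    refine ⟨⟨filter_subset _ _, ?_⟩, hBF⟩
    have h3 := card_union_of_disjoint (disj_T_tau (s := s) (A := (range N).filter (fun x => x + (s+1) ∈ B)) hT)
    rw [hu, tau_card, hB'.2] at h3
    omega

lemma lk_full {s N k : ℕ} {T : Finset ℕ} (hT : T ⊆ range (s+1)) {c : ℕ} (hc : T.card + c = k) :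
    (lk ((range (N+s+1)).powersetCard k) s N T c).card = N.choose c := by
  have : lk ((range (N+s+1)).powersetCard k) s N T c = (range N).powersetCard c := by
    apply subset_antisymm (lk_sub _ _ _ _ _)
    intro A hA
    rw [mem_powersetCard] at hA
    rw [mem_lk]
    refine ⟨hA, ?_⟩
    rw [mem_powersetCard, card_union_of_disjoint (disj_T_tau hT), tau_card]
    refine ⟨?_, by omega⟩
    intro x hx
    rw [mem_union, mem_tau] at hx
    rw [mem_range]
    rcases hx with h | ⟨y, hy, rfl⟩
    · have := mem_range.1 (hT h); omega
    · have := mem_range.1 (hA.1 hy); omega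
  rw [this, card_powersetCard, card_range]

lemma fil_one {F : Finset (Finset ℕ)} {s N c : ℕ} (hF : F ⊆ (range (N+s+1)).powersetCard (c+2)) :
    (F.filter (fun A => (A ∩ range (s+1)).card = 1)).card = ∑ i ∈ range (s+1), (lk F s N {i} (c+1)).card := by
  classical
  have e : F.filter (fun A => (A ∩ range (s+1)).card = 1) =
      (range (s+1)).biUnion (fun i => F.filter (fun A => A ∩ range (s+1) = {i})) := by
    ext A
    simp only [mem_filter, mem_biUnion]
    constructor
    · rintro ⟨h1, h2⟩
      obtain ⟨a, ha⟩ := card_eq_one.1 h2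
      have : a ∈ A ∩ range (s+1) := by rw [ha]; simp
      exact ⟨a, (mem_inter.1 this).2, h1, ha⟩
    · rintro ⟨a, _, h1, h2⟩
      exact ⟨h1, by rw [h2]; simp⟩
  rw [e, card_biUnion]
  · apply sum_congr rfl
    intro i hi
    apply fil_card hF
    · simpa using hi
    · simp; omega
  · intro i _ j _ hij
    refine disjoint_left.2 ?_
    intro A h1 h2
    have h1 := (mem_filter.1 h1).2
    have h2 := (mem_filter.1 h2).2
    rw [h1] at h2
    exact hij (by simpa using h2)

lemma split3 {F : Finset (Finset ℕ)} {s N c : ℕ} (hF : F ⊆ (range (N+s+1)).powersetCard (c+2)) :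
    F.card = (lk F s N ∅ (c+2)).card + ∑ i ∈ range (s+1), (lk F s N {i} (c+1)).card +
      (F.filter (fun A => 2 ≤ (A ∩ range (s+1)).card)).card := by
  classical
  rw [← fil_one hF, ← fil_card hF (T := ∅) (by simp) (by simp)]
  have h1 := card_filter_add_card_filter_not (s := F) (fun A => 2 ≤ (A ∩ range (s+1)).card)
  have h2 := card_filter_add_card_filter_not (s := F.filter (fun A => ¬ 2 ≤ (A ∩ range (s+1)).card))
    (fun A => (A ∩ range (s+1)).card = 1)
  rw [filter_filter, filter_filter] at h2
  have e1 : F.filter (fun A => ¬ 2 ≤ (A ∩ range (s+1)).card ∧ (A ∩ range (s+1)).card = 1) =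
    F.filter (fun A => (A ∩ range (s+1)).card = 1) := by
    apply filter_congr; intro A _; omega
  have e2 : F.filter (fun A => ¬ 2 ≤ (A ∩ range (s+1)).card ∧ ¬ (A ∩ range (s+1)).card = 1) =
    F.filter (fun A => A ∩ range (s+1) = ∅) := by
    apply filter_congr; intro A _; rw [← Finset.card_eq_zero]; omega
  rw [e1, e2] at h2
  omega

lemma upper {F : Finset (Finset ℕ)} {s k n : ℕ} (hs : 100000000 ≤ s) (hk : 2 ≤ k)
    (hn : (5 / 3 : ℝ) * s * k - (2 / 3 : ℝ) * s ≤ (n : ℝ))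
    (hF : F ⊆ (range n).powersetCard k) (hNM : NM F s) :
    F.card ≤ n.choose k - (n - s).choose k := by
  classical
  obtain ⟨F', h1, h2, h3, h4⟩ := exists_shifted n k s _ F rfl hF hNM
  rw [← h3]
  obtain ⟨c, rfl⟩ : ∃ c, k = c + 2 := ⟨k - 2, by omega⟩
  have rs : (100000000:ℝ) ≤ s := by exact_mod_cast hs
  have hc0 : (0:ℝ) ≤ c := by positivity
  push_cast at hn
  have hsc : (0:ℝ) ≤ s * c := by positivity
  have hns : s + 1 ≤ n := by
    have : (s:ℝ) + 1 ≤ n := by linarith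
    exact_mod_cast this
  obtain ⟨N, rfl⟩ : ∃ N, n = N + s + 1 := ⟨n - (s+1), by omega⟩
  have hN : (5/3:ℝ) * s * (c+1) - 1 ≤ N := by push_cast at hn; linarith
  have hm := main_est h4 hs h2 hN
  have a1 := split3 h1
  have a2 := split3 (F := (range (N+s+1)).powersetCard (c+2)) (s := s) subset_rfl
  have a3 := card_le_card (filter_subset_filter (fun A => 2 ≤ (A ∩ range (s+1)).card) h1)
  rw [lk_full (by simp) (by simp), sum_congr rfl (fun i hi => lk_full (s := s) (N := N) (T := {i}) (c := c+1)
    (by simpa using hi) (by simp; omega)), card_powersetCard, card_range] at a2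
  simp only [sum_const, card_range, smul_eq_mul] at a2
  have e : N + s + 1 - s = N + 1 := by omega
  rw [e, Nat.choose_succ_succ' N (c+1)]
  have : (s+1) * N.choose (c+1) = s * N.choose (c+1) + N.choose (c+1) := by ring
  have e3 : c + 1 + 1 = c + 2 := rfl
  rw [e3]
  omega

lemma lower {s k n : ℕ} : ∃ F : Finset (Finset ℕ), F ⊆ (range n).powersetCard k ∧ NM F s ∧
    F.card = n.choose k - (n - s).choose k := by
  classical
  refine ⟨(range n).powersetCard k \ (range n \ range s).powersetCard k, sdiff_subset, ?_, ?_⟩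
  · intro f hf hd
    have : ∀ i, ∃ x, x ∈ f i ∧ x < s := by
      intro i
      have h := hf i
      rw [mem_sdiff, mem_powersetCard, mem_powersetCard] at h
      by_contra hcon
      push Not at hcon
      refine h.2 ⟨fun x hx => ?_, h.1.2⟩
      rw [mem_sdiff]
      refine ⟨h.1.1 hx, ?_⟩
      have := hcon x hx
      simpa using this
    choose g hg1 hg2 using this
    have hinj : Function.Injective (fun i => (⟨g i, hg2 i⟩ : Fin s)) := by
      intro i j hij
      by_contra hne
      have h5 : g i = g j := by simpa using hij
      have := disjoint_left.1 (hd i j hne) (hg1 i)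
      rw [h5] at this
      exact this (hg1 j)
    have := Fintype.card_le_of_injective _ hinj
    simp at this
  · rw [card_sdiff_of_subset (powersetCard_mono sdiff_subset), card_powersetCard, card_powersetCard, card_range]
    congr 2
    rw [card_sdiff, ]
    simp
    omega

lemma mn_iff {F : Finset (Finset ℕ)} {s k n : ℕ} (hk : 1 ≤ k) (hF : F ⊆ (range n).powersetCard k) :
    matchingNumber F ≤ s ↔ NM F s := by
  classical
  have hbd : BddAbove {t : ℕ | ∃ M : Finset (Finset ℕ), M ⊆ F ∧
    (M : Set (Finset ℕ)).Pairwise (fun A B => Disjoint A B) ∧ M.card = t} := by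
    refine ⟨F.card, ?_⟩
    rintro t ⟨M, h1, _, rfl⟩
    exact card_le_card h1
  constructor
  · intro h f hf hd
    have hinj : Function.Injective f := by
      intro i j hij
      by_contra hne
      have := hd i j hne
      rw [hij, disjoint_self] at this
      have h1 := (mem_powersetCard.1 (hF (hf j))).2
      rw [this] at h1
      simp at h1
      omega
    have : s + 1 ≤ matchingNumber F := by
      apply le_csSup hbd
      refine ⟨univ.image f, ?_, ?_, ?_⟩
      · intro A hA
        obtain ⟨i, _, rfl⟩ := mem_image.1 hA
        exact hf i
      · intro A hA B hB hAB
        obtain ⟨i, _, rfl⟩ := mem_image.1 (mem_coe.1 hA)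
        obtain ⟨j, _, rfl⟩ := mem_image.1 (mem_coe.1 hB)
        exact hd i j (fun h => hAB (by rw [h]))
      · rw [card_image_of_injective _ hinj]; simp
    omega
  · intro h
    refine csSup_le (⟨0, ∅, by simp⟩ : Set.Nonempty {t : ℕ | ∃ M : Finset (Finset ℕ), M ⊆ F ∧
      (M : Set (Finset ℕ)).Pairwise (fun A B => Disjoint A B) ∧ M.card = t}) ?_
    rintro t ⟨M, h1, h2, rfl⟩
    by_contra hcon
    push Not at hcon
    obtain ⟨M', hM', hc⟩ := exists_subset_card_eq (show s + 1 ≤ M.card by omega)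
    let e := M'.equivFinOfCardEq hc
    refine h (fun i => (e.symm i : Finset ℕ)) (fun i => h1 (hM' (e.symm i).2)) ?_
    intro i j hij
    apply h2 (hM' (e.symm i).2) (hM' (e.symm j).2)
    intro heq
    exact hij (e.symm.injective (Subtype.ext heq))

theorem erdos_matching_five_thirds :
    ∃ s₀ : ℕ, ∀ s k n : ℕ, s₀ ≤ s → 2 ≤ k →
      (5 / 3 : ℝ) * s * k - (2 / 3 : ℝ) * s ≤ (n : ℝ) →
      maxSizeEMC n k s = n.choose k - (n - s).choose k := by
  refine ⟨100000000, fun s k n hs hk hn => ?_⟩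
  apply IsGreatest.csSup_eq
  constructor
  · obtain ⟨F, h1, h2, h3⟩ := lower (s := s) (k := k) (n := n)
    exact ⟨F, h1, (mn_iff (by omega) h1).2 h2, h3⟩
  · rintro t ⟨F, h1, h2, rfl⟩
    exact upper hs hk hn h1 ((mn_iff (by omega) h1).1 h2)
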